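/- arXiv:1610.03537 — 3 statements merged into one kernel-verified Lean document; each statement's English description precedes it below -/
import Mathlib

section
/- Let (X,d) be a Cantor space with metric d, let (X,T) be a minimal Cantor system such that T is expansive, and let S be a bounded speedup of T. Then S is expansive. -/
/-- A minimal Cantor-type dynamical system: every `T`-orbit (over `ℤ`) is dense. -/
def IsMinimalHomeo {X : Type*} [TopologicalSpace X] (T : Equiv.Perm X) : Prop :=
  ∀ x : X, Dense (Set.range fun n : ℤ => (T ^ n) x)

/-- A homeomorphism `R` of a compact metric space is expansive if there is `δ > 0` such that
any two distinct points are separated to distance `> δ` by some power `R^n`, `n ∈ ℤ`. -/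
def IsExpansive {X : Type*} [MetricSpace X] (R : Equiv.Perm X) : Prop :=
  ∃ δ : ℝ, 0 < δ ∧ ∀ x y : X, x ≠ y → ∃ n : ℤ, δ < dist ((R ^ n) x) ((R ^ n) y)

/-- A minimal homeomorphism of a perfect T1 space has no periodic points. -/
theorem IsMinimalHomeo.injective_zpow_apply {X : Type*} [TopologicalSpace X] [T1Space X]
    [PerfectSpace X] {T : Equiv.Perm X} (hT : IsMinimalHomeo T) (x : X) :
    Function.Injective fun n : ℤ => (T ^ n) x := by
  have hper (d : ℤ) (hd : 0 < d) : (T ^ d) x ≠ x := fun h => by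
    have hfin : (Set.range fun n : ℤ => (T ^ n) x).Finite := by
      refine ((Set.finite_Ico 0 d).image fun n : ℤ => (T ^ n) x).subset ?_
      rintro _ ⟨n, rfl⟩
      refine ⟨n % d, ⟨Int.emod_nonneg _ hd.ne', Int.emod_lt_of_pos _ hd⟩, ?_⟩
      have hq : ((T ^ d) ^ (n / d)) x = x := Equiv.Perm.zpow_apply_eq_self_of_apply_eq_self h _
      conv_rhs => rw [← Int.emod_add_mul_ediv n d]
      simp only [zpow_add, zpow_mul, Equiv.Perm.mul_apply, hq]
    have huniv := (hT x).closure_eq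
    rw [hfin.isClosed.closure_eq] at huniv
    rw [huniv] at hfin
    exact infinite_of_mem_nhds x Filter.univ_mem hfin
  have key (a b : ℤ) (hab : a < b) : (T ^ a) x ≠ (T ^ b) x := fun h => by
    apply hper (b - a) (by omega)
    apply (T ^ a).injective
    rw [← Equiv.Perm.mul_apply, ← zpow_add, h]
    congr 2
    omega
  intro a b h
  rcases lt_trichotomy a b with hab | hab | hab
  · exact (key a b hab h).elim
  · exact hab
  · exact (key b a hab h.symm).elim

/-- A bounded `ℕ`-valued function with closed fibers is continuous. -/
theorem continuous_of_isClosed_fiber_of_le {X : Type*} [TopologicalSpace X] {p : X → ℕ} {M : ℕ}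
    (hM : ∀ x, p x ≤ M) (hp : ∀ k, IsClosed (p ⁻¹' {k})) : Continuous p := by
  refine continuous_discrete_rng.2 fun k => ?_
  have : p ⁻¹' {k} = (⋃ j ∈ Set.Iic M \ {k}, p ⁻¹' {j})ᶜ := by
    ext x
    simp only [Set.mem_preimage, Set.mem_singleton_iff, Set.mem_compl_iff, Set.mem_iUnion]
    exact ⟨fun h ⟨j, hj, hxj⟩ => hj.2 (hxj.symm.trans h),
      fun h => by_contra fun hne => h ⟨p x, ⟨hM x, hne⟩, rfl⟩⟩
  rw [this, isOpen_compl_iff]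
  exact ((Set.finite_Iic M).subset Set.sdiff_subset).isClosed_biUnion fun j _ => hp j

/-- If the jump function agrees along the `S`-orbits of `x` and `y`, then each iterate of `T` on
the pair `(x, y)` is reached from a common iterate of `S` by fewer `T`-steps than one jump. -/
theorem exists_zpow_eq_pow_speedup {X : Type*} {T S : Equiv.Perm X} {p : X → ℕ}
    (hp1 : ∀ x, 1 ≤ p x) (hSp : ∀ x, S x = (T ^ p x) x) {x y : X}
    (hpeq : ∀ n : ℤ, p ((S ^ n) x) = p ((S ^ n) y)) (m : ℤ) :
    ∃ (n : ℤ) (k : ℕ), k < p ((S ^ n) x) ∧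
      (T ^ m) x = (T ^ k) ((S ^ n) x) ∧ (T ^ m) y = (T ^ k) ((S ^ n) y) := by
  have hS (n : ℤ) (z : X) : (S ^ (n + 1)) z = (T ^ p ((S ^ n) z)) ((S ^ n) z) := by
    rw [← hSp, add_comm, zpow_add, zpow_one, Equiv.Perm.mul_apply]
  induction m using Int.induction_on with
  | zero => exact ⟨0, 0, hp1 _, by simp, by simp⟩
  | succ i ih =>
    obtain ⟨n, k, hk, hx, hy⟩ := ih
    have step {z : X} (hz : (T ^ (i : ℤ)) z = (T ^ k) ((S ^ n) z)) :
        (T ^ ((i : ℤ) + 1)) z = (T ^ (k + 1)) ((S ^ n) z) := by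
      rw [add_comm, zpow_add, zpow_one, Equiv.Perm.mul_apply, hz, pow_succ', Equiv.Perm.mul_apply]
    rcases (Nat.succ_le_of_lt hk).lt_or_eq with h | h
    · exact ⟨n, k + 1, h, step hx, step hy⟩
    · refine ⟨n + 1, 0, hp1 _, ?_, ?_⟩
      · rw [step hx, hS, ← h]; rfl
      · rw [step hy, hS, ← hpeq, ← h]; rfl
  | pred i ih =>
    obtain ⟨n, k, hk, hx, hy⟩ := ih
    have step {z w : X} {j : ℕ} (hz : (T ^ (-(i : ℤ))) z = (T ^ (j + 1)) w) :
        (T ^ (-(i : ℤ) - 1)) z = (T ^ j) w := by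
      apply T.injective
      rw [← Equiv.Perm.mul_apply, ← Equiv.Perm.mul_apply, ← pow_succ', ← hz, ← zpow_one_add]
      congr 2
      omega
    cases k with
    | succ j => exact ⟨n, j, by omega, step hx, step hy⟩
    | zero =>
      have hpos := hp1 ((S ^ (n - 1)) x)
      have hback {z : X} (hz : (T ^ (-(i : ℤ))) z = (T ^ 0) ((S ^ n) z))
          (hpz : p ((S ^ (n - 1)) x) = p ((S ^ (n - 1)) z)) :
          (T ^ (-(i : ℤ))) z = (T ^ (p ((S ^ (n - 1)) x) - 1 + 1)) ((S ^ (n - 1)) z) := by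
        rw [Nat.sub_add_cancel hpos, hpz, ← hS, sub_add_cancel, hz, pow_zero, Equiv.Perm.one_apply]
      exact ⟨n - 1, p ((S ^ (n - 1)) x) - 1, by omega, step (hback hx rfl),
        step (hback hy (hpeq _))⟩

/-- A bounded speedup of an expansive minimal Cantor system is expansive. -/
theorem boundedSpeedup_expansive
    {X : Type*} [MetricSpace X] [CompactSpace X]
    [TotallyDisconnectedSpace X] [PerfectSpace X] [Nonempty X]
    (T : Equiv.Perm X) (hTc : Continuous T) (hTc' : Continuous T.symm)
    (hTmin : IsMinimalHomeo T) (hTexp : IsExpansive T)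
    (p : X → ℕ) (hp1 : ∀ x, 1 ≤ p x) (hpbdd : ∃ M : ℕ, ∀ x, p x ≤ M)
    (S : Equiv.Perm X) (hSc : Continuous S) (hSc' : Continuous S.symm)
    (hSp : ∀ x, S x = (T ^ p x) x) :
    IsExpansive S := by
  obtain ⟨M, hM⟩ := hpbdd
  obtain ⟨δ, hδ, hexp⟩ := hTexp
  have hTk (k : ℕ) : Continuous (T ^ k : Equiv.Perm X) := by
    rw [Equiv.Perm.coe_pow]
    exact hTc.iterate k
  have hp : Continuous p := continuous_of_isClosed_fiber_of_le hM fun k => by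
    have : p ⁻¹' {k} = {x | S x = (T ^ k) x} := by
      ext x
      simp only [Set.mem_preimage, Set.mem_singleton_iff, Set.mem_ofPred_eq, hSp]
      refine ⟨fun h => by rw [h], fun h => ?_⟩
      have := hTmin.injective_zpow_apply x (a₁ := (p x : ℤ)) (a₂ := (k : ℤ)) (by simpa using h)
      exact_mod_cast this
    rw [this]
    exact isClosed_eq hSc (hTk k)
  obtain ⟨ε₁, hε₁, hpε⟩ := Metric.uniformContinuous_iff.1
    (CompactSpace.uniformContinuous_of_continuous hp) 1 one_pos
  have hF : Continuous fun x (k : Fin (M + 1)) => (T ^ (k : ℕ)) x :=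
    continuous_pi fun k => hTk k
  obtain ⟨ε₂, hε₂, hTε⟩ := Metric.uniformContinuous_iff.1
    (CompactSpace.uniformContinuous_of_continuous hF) δ hδ
  refine ⟨min ε₁ ε₂ / 2, by positivity, fun x y hxy => ?_⟩
  by_contra! hclose
  have hlt (n : ℤ) : dist ((S ^ n) x) ((S ^ n) y) < min ε₁ ε₂ :=
    (hclose n).trans_lt (half_lt_self (lt_min hε₁ hε₂))
  have hpeq (n : ℤ) : p ((S ^ n) x) = p ((S ^ n) y) := by
    by_contra hne
    exact (hpε ((hlt n).trans_le (min_le_left _ _))).not_ge (Nat.pairwise_one_le_dist hne)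
  obtain ⟨m, hm⟩ := hexp x y hxy
  obtain ⟨n, k, hk, hx, hy⟩ := exists_zpow_eq_pow_speedup hp1 hSp hpeq m
  rw [hx, hy] at hm
  have hkM : k < M + 1 := by have := hM ((S ^ n) x); omega
  exact hm.not_ge ((dist_le_pi_dist _ _ (⟨k, hkM⟩ : Fin (M + 1))).trans
    (hTε ((hlt n).trans_le (min_le_right _ _))).le)
end

section
/- Let A be a finite alphabet and let X ⊆ A^ℤ be a nonempty subshift. For n ≥ 1 let W_n(X) denote the set of words of length n appearing in X, i.e. W_n(X) = {(x_i, x_{i+1}, …, x_{i+n−1}) : x ∈ X, i ∈ ℤ}. If there exist n, j > 0 such that the cardinality of W_n(X) is at least the cardinality of W_{n+j}(X), then X is a finite set. -/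
/-- The left shift on bi-infinite sequences. -/
def shiftMap {A : Type*} : (ℤ → A) → (ℤ → A) := fun x k => x (k + 1)

/-- The set of words of length `n` appearing in a subshift `X`. -/
def wordsOf {A : Type*} (X : Set (ℤ → A)) (n : ℕ) : Set (Fin n → A) :=
  {w : Fin n → A | ∃ x ∈ X, ∃ i : ℤ, ∀ t : Fin n, w t = x (i + (t : ℕ))}

/-- Every word of length `n` of `X` is the window starting at position `c` of a word of
length `n + j` of `X`. -/
theorem image_window_wordsOf {A : Type*} (X : Set (ℤ → A)) (n j c : ℕ) (hc : c ≤ j) :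
    (fun (w : Fin (n + j) → A) (t : Fin n) => w ⟨c + t, by omega⟩) '' wordsOf X (n + j) =
      wordsOf X n := by
  ext v
  constructor
  · rintro ⟨w, ⟨x, hx, i, hw⟩, rfl⟩
    refine ⟨x, hx, i + c, fun t => ?_⟩
    simp only [hw]
    congr 1
    push_cast
    ring
  · rintro ⟨x, hx, i, hv⟩
    refine ⟨fun t => x (i - c + (t : ℕ)), ⟨x, hx, i - c, fun t => rfl⟩, ?_⟩
    funext t
    simp only [hv]
    congr 1
    push_cast
    ring

/-- If `X` has at most as many words of length `n + j` as of length `n`, then two points of `X`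
which agree on a window of length `n` agree on every window of length `n + j` containing it. -/
theorem eq_on_larger_window {A : Type*} [Finite A] {X : Set (ℤ → A)} {n j : ℕ}
    (hcard : (wordsOf X (n + j)).ncard ≤ (wordsOf X n).ncard) {x y : ℤ → A}
    (hx : x ∈ X) (hy : y ∈ X) {c : ℕ} (hc : c ≤ j) {i : ℤ}
    (h : ∀ t : ℕ, t < n → x (i + t) = y (i + t)) {t : ℕ} (ht : t < n + j) :
    x (i - c + t) = y (i - c + t) := by
  have hinj : Set.InjOn (fun (w : Fin (n + j) → A) (t : Fin n) => w ⟨c + t, by omega⟩)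
      (wordsOf X (n + j)) := by
    refine (Set.ncard_image_iff (Set.toFinite _)).1
      (le_antisymm (Set.ncard_image_le (Set.toFinite _)) ?_)
    rwa [image_window_wordsOf X n j c hc]
  have key := @hinj (fun t => x (i - c + (t : ℕ))) ⟨x, hx, i - c, fun _ => rfl⟩
    (fun t => y (i - c + (t : ℕ))) ⟨y, hy, i - c, fun _ => rfl⟩ ?_
  · exact congrFun key ⟨t, ht⟩
  · funext s
    have e : i - c + ((c + (s : ℕ) : ℕ) : ℤ) = i + (s : ℕ) := by push_cast; ring
    simpa only [e] using h s s.2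

/-- If, in a nonempty subshift `X`, the number of words of some length `n`
is at least the number of words of length `n + j` for some `j > 0`, then `X` is finite. -/
theorem subshift_finite_of_word_count_nonincreasing
    {A : Type*} [Fintype A] [Nonempty A] [TopologicalSpace A] [DiscreteTopology A]
    (X : Set (ℤ → A)) (hXne : X.Nonempty) (hXclosed : IsClosed X)
    (hXinv : shiftMap '' X = X)
    (n j : ℕ) (hn : 0 < n) (hj : 0 < j)
    (hcard : (wordsOf X (n + j)).ncard ≤ (wordsOf X n).ncard) :
    X.Finite := by
  refine Set.Finite.of_injOn (f := fun (x : ℤ → A) (t : Fin n) => x ((t : ℕ) : ℤ))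
    (t := Set.univ) (fun _ _ => Set.mem_univ _) ?_ Set.finite_univ
  intro x hx y hy hxy
  have agree : ∀ k : ℤ, ∀ t : ℕ, t < n → x (k + t) = y (k + t) := by
    intro k
    induction k using Int.induction_on with
    | zero =>
      intro t ht
      simpa using congrFun hxy ⟨t, ht⟩
    | succ k ih =>
      intro t ht
      have := eq_on_larger_window hcard hx hy (Nat.zero_le j) ih (t := t + 1) (by omega)
      convert this using 2 <;> push_cast <;> ring
    | pred k ih =>
      intro t ht
      have := eq_on_larger_window hcard hx hy le_rfl ih (t := j - 1 + t) (by omega)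
      convert this using 2 <;> omega
  funext k
  simpa using agree k 0 hn
end

section
/- Let θ be a proper, primitive, aperiodic substitution on a finite alphabet A, let (X^θ, T) be the associated substitution subshift (a minimal Cantor system), and let S be a bounded speedup of T which is minimal. Then (X^θ, S) is self-induced: there exist a nonempty proper clopen subset U ⊊ X^θ and a homeomorphism φ : X^θ → U such that φ(S(x)) = S_U(φ(x)) for all x ∈ X^θ, where S_U : U → U is the first-return map of S to U, defined by S_U(y) = S^{r(y)}(y) with r(y) = min{n ≥ 1 : S^n(y) ∈ U}. -/
/-- The `k`-th iterate of the substitution `θ` applied to the letter `a`. -/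
def substIter {A : Type*} (θ : A → List A) (k : ℕ) (a : A) : List A :=
  (fun w : List A => w.flatMap θ)^[k] [a]

/-- A substitution is primitive if every letter eventually appears in every iterate, and all
iterate lengths tend to infinity. -/
def SubstPrimitive {A : Type*} (θ : A → List A) : Prop :=
  (∀ a b : A, ∃ k : ℕ, b ∈ substIter θ k a) ∧
  ∀ a : A, Filter.Tendsto (fun k => (substIter θ k a).length) Filter.atTop Filter.atTop

/-- A substitution is proper if for some `k`, all the words `θ^k(a)` begin with a common
letter `l` and end with a common letter `r`. -/
def SubstProper {A : Type*} (θ : A → List A) : Prop :=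
  ∃ (l r : A) (k : ℕ), ∀ a : A,
    (substIter θ k a).head? = some l ∧ (substIter θ k a).getLast? = some r

/-- The substitution subshift: bi-infinite sequences all of whose finite subwords appear as
subwords of some `θ^k(a)`. -/
def substShift {A : Type*} (θ : A → List A) : Set (ℤ → A) :=
  {x | ∀ (i : ℤ) (n : ℕ), ∃ (k : ℕ) (a : A),
    (List.ofFn fun t : Fin n => x (i + (t : ℕ))) <:+: substIter θ k a}

/-- A substitution is aperiodic if its subshift contains no shift-periodic points. -/
def SubstAperiodic {A : Type*} (θ : A → List A) : Prop :=
  ∀ x ∈ substShift θ, ∀ n : ℕ, 0 < n → shiftMap^[n] x ≠ x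

namespace Speedup

/-- `ω` reads the same on the window `[a, b)` around `i` and around `i'`. -/
def Agree {A : Type*} (ω : ℤ → A) (i i' a b : ℤ) : Prop :=
  ∀ t, a ≤ t → t < b → ω (i + t) = ω (i' + t)

section Agree

variable {A : Type*} {ω : ℤ → A} {i i' i'' a b a' b' : ℤ}

lemma Agree.refl (ω : ℤ → A) (i a b : ℤ) : Agree ω i i a b := fun _ _ _ => rfl

lemma Agree.symm (h : Agree ω i i' a b) : Agree ω i' i a b :=
  fun t h₁ h₂ => (h t h₁ h₂).symm

lemma Agree.trans (h : Agree ω i i' a b) (h' : Agree ω i' i'' a b) : Agree ω i i'' a b :=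
  fun t h₁ h₂ => (h t h₁ h₂).trans (h' t h₁ h₂)

lemma Agree.mono (h : Agree ω i i' a b) (ha : a ≤ a') (hb : b' ≤ b) : Agree ω i i' a' b' :=
  fun t h₁ h₂ => h t (by lia) (by lia)

/-- Recentring an agreement by `d`. -/
lemma Agree.shift (h : Agree ω i i' a b) (d : ℤ) : Agree ω (i + d) (i' + d) (a - d) (b - d) := by
  intro t h₁ h₂
  have := h (d + t) (by lia) (by lia)
  rwa [← add_assoc, ← add_assoc] at this

end Agree

/-- `f` cuts `ω` into blocks `[f j, f (j + 1))` each of which is determined by the letter `ω j`;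
thus `ω` is a fixed point of a substitution, and `0` is a cutting point. -/
structure Inflation {A : Type*} (ω : ℤ → A) (f : ℤ → ℤ) : Prop where
  zero : f 0 = 0
  lt_succ : ∀ j, f j < f (j + 1)
  gap : ∀ j j', ω j = ω j' → f (j + 1) - f j = f (j' + 1) - f j'
  letter : ∀ j j', ω j = ω j' → ∀ t, 0 ≤ t → t < f (j + 1) - f j → ω (f j + t) = ω (f j' + t)

/-- An increasing integer sequence cuts `ℤ` into intervals. -/
lemma exists_le_lt_succ {f : ℤ → ℤ} (hf : StrictMono f) (i : ℤ) :
    ∃ j, f j ≤ i ∧ i < f (j + 1) := by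
  have key : ∀ n : ℕ, ∀ j : ℤ, f j + n ≤ f (j + n) := by
    intro n
    induction n with
    | zero => intro j; simp
    | succ n ih =>
      intro j
      have h₁ := ih j
      have h₂ : f (j + n) < f (j + n + 1) := hf (by lia)
      push_cast
      rw [← add_assoc j]
      lia
  obtain ⟨j, hj, hmax⟩ := Int.exists_greatest_of_bdd (P := fun j => f j ≤ i)
    ⟨(i - f 0).natAbs, fun z hz => by
      by_contra hlt
      have h₁ := key (i - f 0).natAbs 0
      have h₂ : f (0 + (i - f 0).natAbs) < f z := hf (by lia)
      lia⟩
    ⟨-((i - f 0).natAbs : ℤ), by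
      have h₁ := key (i - f 0).natAbs (-((i - f 0).natAbs : ℤ))
      rw [neg_add_cancel] at h₁
      lia⟩
  refine ⟨j, hj, ?_⟩
  by_contra hlt
  have := hmax (j + 1) (by lia)
  lia

/-- If all gaps of `f` are at least `c`, then increments over `n` steps are at least `n * c`. -/
lemma mul_le_sub_of_gap {f : ℤ → ℤ} {c : ℤ} (h : ∀ j, c ≤ f (j + 1) - f j) (n : ℕ) (j : ℤ) :
    n * c ≤ f (j + n) - f j := by
  induction n with
  | zero => simp
  | succ n ih =>
    have := h (j + n)
    push_cast
    rw [← add_assoc]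
    linarith

/-- If all gaps of `f` are at most `c`, then increments over `n` steps are at most `n * c`. -/
lemma sub_le_mul_of_gap {f : ℤ → ℤ} {c : ℤ} (h : ∀ j, f (j + 1) - f j ≤ c) (n : ℕ) (j : ℤ) :
    f (j + n) - f j ≤ n * c := by
  induction n with
  | zero => simp
  | succ n ih =>
    have := h (j + n)
    push_cast
    rw [← add_assoc]
    linarith

lemma mul_le_sub_of_gap_of_le {f : ℤ → ℤ} {c : ℤ} (h : ∀ j, c ≤ f (j + 1) - f j) {j j' : ℤ}
    (hj : j ≤ j') : (j' - j) * c ≤ f j' - f j := by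
  obtain ⟨n, hn⟩ := Int.le.dest hj
  have := mul_le_sub_of_gap h n j
  subst hn
  simpa using this

lemma sub_le_mul_of_gap_of_le {f : ℤ → ℤ} {c : ℤ} (h : ∀ j, f (j + 1) - f j ≤ c) {j j' : ℤ}
    (hj : j ≤ j') : f j' - f j ≤ (j' - j) * c := by
  obtain ⟨n, hn⟩ := Int.le.dest hj
  have := sub_le_mul_of_gap h n j
  subst hn
  simpa using this

namespace Inflation

variable {A : Type*} {ω : ℤ → A} {f g : ℤ → ℤ}

lemma strictMono (h : Inflation ω f) : StrictMono f :=
  strictMono_int_of_lt_succ h.lt_succ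

lemma sub_le_sub (h : Inflation ω f) {i j : ℤ} (hij : i ≤ j) : j - i ≤ f j - f i := by
  have := mul_le_sub_of_gap_of_le (f := f) (c := 1) (fun j => by have := h.lt_succ j; lia) hij
  lia

/-- Increments of `f` along an agreement coincide, to the right of the centre. -/
lemma sub_eq_nonneg (h : Inflation ω f) {i i' : ℤ} (n : ℕ) (hag : Agree ω i i' 0 n) :
    f (i + n) - f i = f (i' + n) - f i' := by
  induction n with
  | zero => simp
  | succ n ih =>
    have h₁ := ih (hag.mono le_rfl (by push_cast; lia))
    have h₂ := h.gap _ _ (hag n (by lia) (by push_cast; lia))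
    push_cast
    rw [← add_assoc, ← add_assoc]
    linarith

lemma sub_eq (h : Inflation ω f) {i i' a b : ℤ} (hag : Agree ω i i' a b) {t u : ℤ}
    (ht : a ≤ t) (htu : t ≤ u) (hu : u ≤ b) :
    f (i + u) - f (i + t) = f (i' + u) - f (i' + t) := by
  obtain ⟨n, hn⟩ := Int.le.dest htu
  have := h.sub_eq_nonneg n ((hag.shift t).mono (a' := 0) (b' := n) (by lia) (by lia))
  subst hn
  rwa [add_assoc, add_assoc] at this

/-- Agreement around `i, i'` inflates to agreement around `f i, f i'`. -/
lemma agree_image (h : Inflation ω f) {i i' a b : ℤ} (hag : Agree ω i i' a b)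
    (ha : a ≤ 0) (hb : 0 ≤ b) :
    Agree ω (f i) (f i') (f (i + a) - f i) (f (i + b) - f i) := by
  intro t h₁ h₂
  obtain ⟨j, hj₁, hj₂⟩ := exists_le_lt_succ h.strictMono (f i + t)
  have hja : i + a ≤ j := by
    by_contra hlt
    have : f (j + 1) ≤ f (i + a) := h.strictMono.monotone (by lia)
    lia
  have hjb : j < i + b := by
    by_contra hlt
    have : f (i + b) ≤ f j := h.strictMono.monotone (by lia)
    lia
  have hl : ω j = ω (i' + (j - i)) := by
    have := hag (j - i) (by lia) (by lia)
    rwa [add_sub_cancel] at this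
  have h₃ := h.letter _ _ hl (f i + t - f j) (by lia) (by lia)
  have h₄ : f j - f i = f (i' + (j - i)) - f i' := by
    rcases le_total 0 (j - i) with hc | hc
    · have := h.sub_eq hag ha hc (by lia)
      simpa using this
    · have := h.sub_eq hag (by lia : a ≤ j - i) hc hb
      simp only [add_zero, add_sub_cancel] at this
      lia
  rw [show f i + t = f j + (f i + t - f j) by ring, h₃]
  congr 1
  lia

lemma comp (hf : Inflation ω f) (hg : Inflation ω g) : Inflation ω (f ∘ g) where
  zero := by simp [hf.zero, hg.zero]
  lt_succ j := hf.strictMono (hg.lt_succ j)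
  gap j j' hj := by
    have hag : Agree ω (g j) (g j') 0 (g (j + 1) - g j) := fun t h₁ h₂ => hg.letter j j' hj t h₁ h₂
    have h₁ := hf.sub_eq hag le_rfl (by have := hg.lt_succ j; lia) le_rfl
    have h₂ := hg.gap j j' hj
    simp only [add_zero, add_sub_cancel] at h₁
    rw [h₂, add_sub_cancel] at h₁
    exact h₁
  letter j j' hj t h₁ h₂ := by
    have hag : Agree ω (g j) (g j') 0 (g (j + 1) - g j) := fun t h₁ h₂ => hg.letter j j' hj t h₁ h₂
    have := hf.agree_image hag le_rfl (by have := hg.lt_succ j; lia) t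
    simp only [add_zero, sub_self, add_sub_cancel] at this
    exact this h₁ h₂

lemma id (ω : ℤ → A) : Inflation ω id where
  zero := rfl
  lt_succ j := by simp
  gap j j' _ := by simp
  letter j j' hj t h₁ h₂ := by
    have : t = 0 := by simp at h₂; lia
    simpa [this] using hj

lemma iterate (hf : Inflation ω f) (k : ℕ) : Inflation ω f^[k] := by
  induction k with
  | zero => exact id ω
  | succ k ih => rw [Function.iterate_succ]; exact ih.comp hf

lemma two_pow_le_iterate (hf : Inflation ω f) (h2 : ∀ j, 2 ≤ f (j + 1) - f j) (k : ℕ) (j : ℤ) :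
    2 ^ k ≤ f^[k] (j + 1) - f^[k] j := by
  induction k with
  | zero => simp
  | succ k ih =>
    rw [Function.iterate_succ_apply', Function.iterate_succ_apply']
    have := mul_le_sub_of_gap_of_le h2 ((hf.iterate k).lt_succ j).le
    rw [pow_succ]
    linarith

lemma exists_gap_le [Finite A] (hf : Inflation ω f) : ∃ c : ℕ, ∀ j, f (j + 1) - f j ≤ c := by
  have : (Set.range fun j => f (j + 1) - f j).Finite := by
    have : (Set.range fun j => f (j + 1) - f j) ⊆
        Set.range fun a : Set.range ω => f (a.2.choose + 1) - f a.2.choose := by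
      rintro _ ⟨j, rfl⟩
      have hj : ω j ∈ Set.range ω := ⟨j, rfl⟩
      exact ⟨⟨ω j, hj⟩, hf.gap _ _ hj.choose_spec⟩
    exact (Set.finite_range _).subset this
  obtain ⟨c, hc⟩ := this.bddAbove
  refine ⟨c.toNat, fun j => ?_⟩
  have := hc ⟨j, rfl⟩
  dsimp at this
  lia

end Inflation

/-- Linear recurrence with constant `C`. -/
def LinRec {A : Type*} (ω : ℤ → A) (C : ℕ) : Prop :=
  ∀ L : ℕ, 1 ≤ L → ∀ i i₀ : ℤ, ∃ i', i₀ ≤ i' ∧ i' < i₀ + C * L ∧ Agree ω i i' 0 L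

/-- Given a letter recurrence bound, some iterate of `f` has all its gaps comparable to `L`. -/
lemma Inflation.exists_iterate_gaps {A : Type*} {ω : ℤ → A} {f : ℤ → ℤ} (hf : Inflation ω f)
    (h2 : ∀ j, 2 ≤ f (j + 1) - f j) {c : ℕ} (hc : ∀ j, f (j + 1) - f j ≤ c)
    (hrec : ∀ j j', ∃ i, f j ≤ i ∧ i < f (j + 1) ∧ ω i = ω j') (L : ℕ) (hL : 1 ≤ L) :
    ∃ h, Inflation ω h ∧ ∀ j, L ≤ h (j + 1) - h j ∧ h (j + 1) - h j ≤ c * c * L := by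
  have hc2 : (2 : ℤ) ≤ c := (h2 0).trans (hc 0)
  have hex : ∃ k : ℕ, ∀ j, (L : ℤ) ≤ f^[k] (j + 1) - f^[k] j := by
    refine ⟨L, fun j => le_trans ?_ (hf.two_pow_le_iterate h2 L j)⟩
    exact_mod_cast Nat.lt_two_pow_self.le
  have hcomp : ∀ k j j', f^[k] (j' + 1) - f^[k] j' ≤ f^[k + 1] (j + 1) - f^[k + 1] j := by
    intro k j j'
    obtain ⟨i, h₁, h₂, h₃⟩ := hrec j j'
    rw [← (hf.iterate k).gap i j' h₃, Function.iterate_succ_apply, Function.iterate_succ_apply]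
    have h₄ := (hf.iterate k).strictMono.monotone h₁
    have h₅ := (hf.iterate k).strictMono.monotone (show i + 1 ≤ f (j + 1) by lia)
    lia
  have hup : ∀ k j x, f^[k] (j + 1) - f^[k] j ≤ x → f^[k + 1] (j + 1) - f^[k + 1] j ≤ x * c := by
    intro k j x hx
    rw [Function.iterate_succ_apply', Function.iterate_succ_apply']
    have := sub_le_mul_of_gap_of_le hc ((hf.iterate k).lt_succ j).le
    nlinarith
  classical
  obtain ⟨k, hk, hmin⟩ : ∃ k : ℕ, (∀ j, (L : ℤ) ≤ f^[k] (j + 1) - f^[k] j) ∧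
      ∀ k' < k, ¬ ∀ j, (L : ℤ) ≤ f^[k'] (j + 1) - f^[k'] j :=
    ⟨Nat.find hex, Nat.find_spec hex, fun _ => Nat.find_min hex⟩
  refine ⟨f^[k], hf.iterate k, fun j => ⟨hk j, ?_⟩⟩
  have hL' : (1 : ℤ) ≤ L := by exact_mod_cast hL
  match k, hk, hmin with
  | 0, _, _ => simp; nlinarith
  | 1, _, _ =>
    have := hup 0 j 1 (by simp)
    rw [zero_add] at this
    nlinarith
  | k + 2, _, hmin =>
    have := hmin (k + 1) (by lia)
    push Not at this
    obtain ⟨j₀, hj₀⟩ := this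
    have := hup (k + 1) j _ (hup k j L ((hcomp k j₀ j).trans hj₀.le))
    linarith

/-- A uniformly recurrent fixed point of a substitution is linearly recurrent. -/
lemma Inflation.exists_linRec {A : Type*} [Finite A] {ω : ℤ → A} {f : ℤ → ℤ} (hf : Inflation ω f)
    (h2 : ∀ j, 2 ≤ f (j + 1) - f j) {D : ℕ}
    (hD : ∀ i i₀ : ℤ, ∃ i', i₀ ≤ i' ∧ i' < i₀ + D ∧ Agree ω i i' 0 2) :
    ∃ C, LinRec ω C := by
  have hD2 : ∀ j, (D : ℤ) ≤ f^[D] (j + 1) - f^[D] j := fun j =>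
    le_trans (by exact_mod_cast Nat.lt_two_pow_self.le) (hf.two_pow_le_iterate h2 D j)
  have hD0 : D ≠ 0 := by
    rintro rfl
    obtain ⟨i', h₁, h₂, -⟩ := hD 0 0
    simp at h₂; lia
  have hg := hf.iterate D
  have hg2 : ∀ j, 2 ≤ f^[D] (j + 1) - f^[D] j := fun j => by
    refine le_trans ?_ (hf.two_pow_le_iterate h2 D j)
    exact_mod_cast (Nat.pow_le_pow_right two_pos (Nat.one_le_iff_ne_zero.mpr hD0) : 2 ^ 1 ≤ 2 ^ D)
  obtain ⟨c, hc⟩ := hg.exists_gap_le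
  refine ⟨(D + 1) * (c * c), fun L hL i i₀ => ?_⟩
  obtain ⟨h, hh, hgap⟩ := hg.exists_iterate_gaps hg2 hc (fun j j' => by
    obtain ⟨i', h₁, h₂, h₃⟩ := hD j' (f^[D] j)
    have h₄ := h₃ 0 le_rfl (by lia)
    simp only [add_zero] at h₄
    exact ⟨i', h₁, by have := hD2 j; lia, h₄.symm⟩) L hL
  obtain ⟨j, hj₁, hj₂⟩ := exists_le_lt_succ hh.strictMono i
  obtain ⟨j₀, hj₀₁, hj₀₂⟩ := exists_le_lt_succ hh.strictMono i₀
  obtain ⟨j', h₁, h₂, h₃⟩ := hD j (j₀ + 1)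
  have hag := hh.agree_image h₃ le_rfl (by lia)
  have hgapj := hh.gap j j' (by simpa using h₃ 0 le_rfl (by lia))
  have h₄ := (hgap (j + 1)).1
  rw [add_assoc, one_add_one_eq_two] at h₄
  have h₅ : h (j₀ + 1) ≤ h j' := hh.strictMono.monotone h₁
  have h₆ : h (j' + 1) ≤ h (j₀ + (D + 1 : ℕ)) := hh.strictMono.monotone (by push_cast; lia)
  have h₇ := sub_le_mul_of_gap (fun j => (hgap j).2) (D + 1) j₀
  refine ⟨h j' + (i - h j), by lia, ?_, ?_⟩
  · push_cast at h₆ h₇ ⊢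
    linarith
  · have := (hag.shift (i - h j)).mono (a' := 0) (b' := L) (by simp; lia) (by lia)
    rwa [add_sub_cancel] at this

/-- `e` enumerates increasingly the occurrences of the central word `ω [-n, n)`. -/
structure Enum {A : Type*} (ω : ℤ → A) (n : ℕ) (e : ℤ → ℤ) : Prop where
  strictMono : StrictMono e
  zero : e 0 = 0
  mem_iff : ∀ i, Agree ω i 0 (-n) n ↔ ∃ j, e j = i

/-- Unbounded sets of integers are enumerated by `ℤ`. -/
lemma exists_enumeration (E : Set ℤ) (h0 : (0 : ℤ) ∈ E) (hup : ∀ i, ∃ i' ∈ E, i < i')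
    (hdown : ∀ i, ∃ i' ∈ E, i' < i) :
    ∃ e : ℤ → ℤ, StrictMono e ∧ e 0 = 0 ∧ ∀ i, i ∈ E ↔ ∃ j, e j = i := by
  classical
  have : NoMaxOrder E := ⟨fun i => by
    obtain ⟨i', h₁, h₂⟩ := hup i
    exact ⟨⟨i', h₁⟩, h₂⟩⟩
  have : NoMinOrder E := ⟨fun i => by
    obtain ⟨i', h₁, h₂⟩ := hdown i
    exact ⟨⟨i', h₁⟩, h₂⟩⟩
  have : Nonempty E := ⟨⟨0, h0⟩⟩
  let _ : SuccOrder E := LinearLocallyFiniteOrder.succOrder E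
  let _ : PredOrder E := LinearLocallyFiniteOrder.predOrder E
  let o : E ≃o ℤ := orderIsoIntOfLinearSuccPredArch
  refine ⟨fun j => o.symm (j + o ⟨0, h0⟩), fun a b hab => ?_, by simp, fun i => ⟨fun hi => ?_, ?_⟩⟩
  · exact o.symm.strictMono (by lia : a + o ⟨0, h0⟩ < b + o ⟨0, h0⟩)
  · exact ⟨o ⟨i, hi⟩ - o ⟨0, h0⟩, by simp⟩
  · rintro ⟨j, rfl⟩
    exact Subtype.coe_prop _

section LinRec

variable {A : Type*} {ω : ℤ → A} {C : ℕ}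

lemma LinRec.exists_occurrence (hC : LinRec ω C) {n : ℕ} (hn : 1 ≤ n) (i : ℤ) :
    ∃ i', Agree ω i' 0 (-n) n ∧ i < i' ∧ i' ≤ i + 2 * C * n := by
  obtain ⟨i', h₁, h₂, h₃⟩ := hC (2 * n) (by lia) (-n) (i + 1 - n)
  have h₄ := (h₃.shift n).symm
  rw [neg_add_cancel] at h₄
  refine ⟨i' + n, h₄.mono (by lia) (by push_cast; lia), by lia, ?_⟩
  push_cast at h₂
  linarith

lemma LinRec.exists_enum (hC : LinRec ω C) {n : ℕ} (hn : 1 ≤ n) : ∃ e, Enum ω n e := by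
  obtain ⟨e, h₁, h₂, h₃⟩ := exists_enumeration {i | Agree ω i 0 (-n) n} (Agree.refl _ _ _ _)
    (fun i => by
      obtain ⟨i', h₁, h₂, -⟩ := hC.exists_occurrence hn i
      exact ⟨i', h₁, h₂⟩)
    (fun i => by
      obtain ⟨i', h₁, -, h₂⟩ := hC.exists_occurrence hn (i - 2 * C * n - 1)
      exact ⟨i', h₁, by linarith⟩)
  exact ⟨e, h₁, h₂, h₃⟩

/-- Two occurrences of the central word of radius `n` are at distance at least of order `n`. -/
lemma LinRec.lt_mul_sub (hC : LinRec ω C) (hper : ∀ q : ℕ, 0 < q → ∃ t, ω (t + q) ≠ ω t)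
    {n : ℕ} {i i' : ℤ} (hi : Agree ω i 0 (-n) n) (hi' : Agree ω i' 0 (-n) n) (hlt : i < i') :
    n < (C + 1) * (i' - i) := by
  obtain ⟨q, hq⟩ := Int.le.dest hlt.le
  have hq0 : 0 < q := by lia
  by_contra! hle
  obtain ⟨t, ht⟩ := hper q hq0
  apply ht
  have hq1 : (1 : ℤ) ≤ q := by lia
  obtain ⟨t', h₁, h₂, h₃⟩ := hC (q + 1) (by lia) t (i - n)
  have hag := hi.trans hi'.symm
  have e₁ := h₃ 0 le_rfl (by push_cast; lia)
  have e₂ := h₃ q (by lia) (by push_cast; lia)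
  have hle' : t' < i + n := by
    subst hq
    push_cast at h₂
    have : (C : ℤ) * (q + 1) ≤ 2 * n := by
      have h0 : (0 : ℤ) ≤ C := by lia
      nlinarith
    linarith
  have e₃ := hag (t' - i) (by lia) (by lia)
  rw [add_zero, add_zero] at e₁
  rw [e₂, e₁, ← hq] at *
  rw [show i + (t' - i) = t' by ring, show i + (q : ℤ) + (t' - i) = t' + q by ring] at e₃
  exact e₃.symm

end LinRec

namespace Enum

variable {A : Type*} {ω : ℤ → A} {n : ℕ} {e : ℤ → ℤ}

lemma agree (he : Enum ω n e) (j : ℤ) : Agree ω (e j) 0 (-n) n :=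
  (he.mem_iff _).2 ⟨j, rfl⟩

lemma lt_succ (he : Enum ω n e) (j : ℤ) : e j < e (j + 1) := he.strictMono (by lia)

lemma gap_le (he : Enum ω n e) {C : ℕ} (hC : LinRec ω C) (hn : 1 ≤ n) (j : ℤ) :
    e (j + 1) - e j ≤ 2 * C * n := by
  obtain ⟨i', h₁, h₂, h₃⟩ := hC.exists_occurrence hn (e j)
  obtain ⟨j', rfl⟩ := (he.mem_iff _).1 h₁
  have : j < j' := he.strictMono.lt_iff_lt.1 h₂
  have : e (j + 1) ≤ e j' := he.strictMono.monotone (by lia)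
  linarith

lemma lt_mul_gap (he : Enum ω n e) {C : ℕ} (hC : LinRec ω C)
    (hper : ∀ q : ℕ, 0 < q → ∃ t, ω (t + q) ≠ ω t) (j : ℤ) :
    n < (C + 1) * (e (j + 1) - e j) :=
  hC.lt_mul_sub hper (he.agree j) (he.agree _) (he.lt_succ j)

lemma mul_le_mul_sub (he : Enum ω n e) {C : ℕ} (hC : LinRec ω C)
    (hper : ∀ q : ℕ, 0 < q → ∃ t, ω (t + q) ≠ ω t) {j j' : ℤ} (hj : j ≤ j') :
    (j' - j) * n ≤ (C + 1) * (e j' - e j) := by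
  have := mul_le_sub_of_gap_of_le (f := fun j => (C + 1 : ℤ) * e j) (c := n)
    (fun j => by have := he.lt_mul_gap hC hper j; linarith) hj
  linarith

/-- Occurrences are transported by agreement. -/
lemma transport (he : Enum ω n e) {i i' a b : ℤ} (h : Agree ω i i' a b) {j : ℤ}
    (h₁ : a + n ≤ e j - i) (h₂ : e j - i ≤ b - n) : ∃ j', e j' = e j - i + i' := by
  rw [← he.mem_iff]
  have h₃ := ((h.shift (e j - i)).mono (a' := -n) (b' := n) (by lia) (by lia)).symm
  rw [add_sub_cancel] at h₃
  have := h₃.trans (he.agree j)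
  rwa [add_comm] at this

/-- The next occurrences after two agreeing occurrences are at the same distance. -/
lemma gap_eq (he : Enum ω n e) {j j' b : ℤ} (h : Agree ω (e j) (e j') (-n) b)
    (hb : e (j + 1) - e j + n ≤ b) : e (j' + 1) - e j' = e (j + 1) - e j := by
  have hs := he.lt_succ j
  have hs' := he.lt_succ j'
  obtain ⟨k, hk⟩ := he.transport h (j := j + 1) (by lia) (by lia)
  have h₁ : j' < k := he.strictMono.lt_iff_lt.1 (by lia)
  have h₂ : e (j' + 1) ≤ e k := he.strictMono.monotone (by lia)
  obtain ⟨k', hk'⟩ := he.transport h.symm (j := j' + 1) (by lia) (by lia)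
  have h₃ : j < k' := he.strictMono.lt_iff_lt.1 (by lia)
  have h₄ : e (j + 1) ≤ e k' := he.strictMono.monotone (by lia)
  lia

/-- The previous occurrences before two agreeing occurrences are at the same distance. -/
lemma gap_pred_eq (he : Enum ω n e) {j j' a : ℤ} (h : Agree ω (e j) (e j') a n)
    (ha : a ≤ e (j - 1) - e j - n) : e j' - e (j' - 1) = e j - e (j - 1) := by
  have hs : e (j - 1) < e j := he.strictMono (by lia)
  have hs' : e (j' - 1) < e j' := he.strictMono (by lia)
  obtain ⟨k, hk⟩ := he.transport h (j := j - 1) (by lia) (by lia)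
  have h₁ : k < j' := he.strictMono.lt_iff_lt.1 (by lia)
  have h₂ : e k ≤ e (j' - 1) := he.strictMono.monotone (by lia)
  obtain ⟨k', hk'⟩ := he.transport h.symm (j := j' - 1) (by lia) (by lia)
  have h₃ : k' < j := he.strictMono.lt_iff_lt.1 (by lia)
  have h₄ : e k' ≤ e (j - 1) := he.strictMono.monotone (by lia)
  lia

lemma sub_eq (he : Enum ω n e) {j j' b : ℤ} (h : Agree ω (e j) (e j') (-n) b) (k : ℕ)
    (hb : e (j + k) - e j + n ≤ b) : e (j' + k) - e j' = e (j + k) - e j := by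
  induction k with
  | zero => simp
  | succ k ih =>
    have hs := he.lt_succ (j + k)
    push_cast at hb ⊢
    rw [← add_assoc] at hb
    have h₁ := ih (by lia)
    have hs0 : e j ≤ e (j + k) := he.strictMono.monotone (by lia)
    have h₂ := (h.shift (e (j + k) - e j)).mono (a' := -n) (by lia) le_rfl
    rw [add_sub_cancel, ← h₁, add_sub_cancel, h₁] at h₂
    have := he.gap_eq h₂ (by lia)
    rw [← add_assoc, ← add_assoc]
    lia

end Enum

/-- The return words at the `j`-th and `j'`-th occurrences coincide, with their context. -/
def SameReturn {A : Type*} (ω : ℤ → A) (n : ℕ) (e : ℤ → ℤ) (j j' : ℤ) : Prop :=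
  e (j + 1) - e j = e (j' + 1) - e j' ∧ Agree ω (e j) (e j') (-n) (e (j + 1) - e j + n)

section SameReturn

variable {A : Type*} {ω : ℤ → A} {n : ℕ} {e : ℤ → ℤ} {j j' j'' : ℤ}

lemma SameReturn.symm (h : SameReturn ω n e j j') : SameReturn ω n e j' j :=
  ⟨h.1.symm, h.1 ▸ h.2.symm⟩

lemma SameReturn.trans (h : SameReturn ω n e j j') (h' : SameReturn ω n e j' j'') :
    SameReturn ω n e j j'' :=
  ⟨h.1.trans h'.1, h.2.trans (h.1 ▸ h'.2)⟩

lemma Enum.sameReturn (he : Enum ω n e) {b : ℤ} (h : Agree ω (e j) (e j') (-n) b)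
    (hb : e (j + 1) - e j + n ≤ b) : SameReturn ω n e j j' :=
  ⟨(he.gap_eq h hb).symm, h.mono le_rfl hb⟩

/-- Every return word already occurs among a bounded number of them. -/
lemma Enum.exists_sameReturn (he : Enum ω n e) {C : ℕ} (hC : LinRec ω C)
    (hper : ∀ q : ℕ, 0 < q → ∃ t, ω (t + q) ≠ ω t) (hn : 1 ≤ n) (j : ℤ) :
    ∃ k : ℕ, k ≤ (C + 1) * (C * (2 * C + 2) + 1) ∧ SameReturn ω n e k j := by
  obtain ⟨i', h₁, h₂, h₃⟩ := hC ((2 * C + 2) * n) (by nlinarith) (e j - n) 0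
  have h₄ := h₃.shift n
  rw [sub_add_cancel] at h₄
  have hgap := he.gap_le hC hn j
  have h₅ : Agree ω (e j) (i' + n) (-n) (e (j + 1) - e j + n) :=
    h₄.mono (by lia) (by push_cast; linarith)
  have hs := he.lt_succ j
  obtain ⟨k, hk⟩ := he.transport (j := j) h₅ (by lia) (by lia)
  rw [sub_self, zero_add] at hk
  rw [← hk] at h₅
  have hk0 : 0 ≤ k := by
    rw [← he.strictMono.le_iff_le, he.zero]; lia
  lift k to ℕ using hk0
  refine ⟨k, ?_, (he.sameReturn h₅ le_rfl).symm⟩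
  have h₆ := he.mul_le_mul_sub hC hper (j := 0) (j' := k) (by lia)
  rw [he.zero, hk, sub_zero, sub_zero] at h₆
  push_cast at h₂
  have h₇ : (k : ℤ) * n ≤ ((C + 1) * (C * (2 * C + 2) + 1)) * n := by
    have : i' + n ≤ (C * (2 * C + 2) + 1) * (n : ℤ) := by linarith
    have h0 : (0 : ℤ) ≤ C + 1 := by lia
    nlinarith
  have := le_of_mul_le_mul_right h₇ (by lia)
  exact_mod_cast this

/-- Inflation acts on the indices of occurrences. -/
lemma Enum.exists_index_map (he : Enum ω n e) {f : ℤ → ℤ} (hf : Inflation ω f) :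
    ∃ F : ℤ → ℤ, ∀ j, e (F j) = f (e j) := by
  have : ∀ j, ∃ k, e k = f (e j) := by
    intro j
    rw [← he.mem_iff]
    have h := hf.agree_image (he.agree j) (by lia) (by lia)
    rw [hf.zero] at h
    refine h.mono ?_ ?_
    · have := hf.sub_le_sub (show e j + -n ≤ e j by lia); lia
    · have := hf.sub_le_sub (show e j ≤ e j + n by lia); lia
  choose F hF using this
  exact ⟨F, hF⟩

/-- The image of a return word under the inflation is a concatenation of return words which
depends only on the return word. -/
lemma SameReturn.image (he : Enum ω n e) {f F : ℤ → ℤ} (hf : Inflation ω f)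
    (hF : ∀ j, e (F j) = f (e j)) (h : SameReturn ω n e j j') :
    F (j + 1) - F j = F (j' + 1) - F j' ∧
      ∀ t : ℕ, t < F (j + 1) - F j → SameReturn ω n e (F j + t) (F j' + t) := by
  have hs := he.lt_succ j
  have hlt : F j < F (j + 1) := by
    rw [← he.strictMono.lt_iff_lt, hF, hF]
    exact hf.strictMono hs
  have hag : Agree ω (e (F j)) (e (F j')) (-n) (e (F (j + 1)) - e (F j) + n) := by
    rw [hF, hF, hF]
    refine (hf.agree_image h.2 (by lia) (by lia)).mono ?_ ?_
    · have := hf.sub_le_sub (show e j + -n ≤ e j by lia); lia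
    · have := hf.sub_le_sub (show e (j + 1) ≤ e j + (e (j + 1) - e j + n) by lia); lia
  have hshift : ∀ t : ℕ, t ≤ F (j + 1) - F j →
      e (F j' + t) - e (F j') = e (F j + t) - e (F j) ∧ e (F j + t) ≤ e (F (j + 1)) := by
    intro t ht
    have : e (F j + t) ≤ e (F (j + 1)) := he.strictMono.monotone (by lia)
    exact ⟨he.sub_eq hag t (by lia), this⟩
  obtain ⟨k, hk⟩ := Int.le.dest hlt.le
  constructor
  · have h₁ := (hshift k (by lia)).1
    have h₂ := hf.sub_eq h.2 (t := 0) (u := e (j + 1) - e j) (by lia) (by lia) (by lia)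
    rw [add_sub_cancel, h.1, add_sub_cancel, add_zero, add_zero, ← hF, ← hF, ← hF, ← hF] at h₂
    rw [hk] at h₁
    have : F j' + k = F (j' + 1) := he.strictMono.injective (by lia)
    lia
  · intro t ht
    have h₁ := hshift t ht.le
    have h₂ := hshift (t + 1) (by push_cast; lia)
    push_cast at h₂
    rw [← add_assoc, ← add_assoc] at h₂
    have hm : e (F j) ≤ e (F j + t) := he.strictMono.monotone (by lia)
    have h₃ := hag.shift (e (F j + t) - e (F j))
    rw [add_sub_cancel, ← h₁.1, add_sub_cancel] at h₃
    exact he.sameReturn (h₃.mono (by lia) le_rfl) (by lia)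

lemma Enum.index_gap_le (he : Enum ω n e) {f F : ℤ → ℤ} (hF : ∀ j, e (F j) = f (e j))
    (hf : Inflation ω f) {C c : ℕ} (hC : LinRec ω C) (hc : ∀ j, f (j + 1) - f j ≤ c)
    (hper : ∀ q : ℕ, 0 < q → ∃ t, ω (t + q) ≠ ω t) (hn : 1 ≤ n) (j : ℤ) :
    F (j + 1) - F j ≤ (C + 1) * (2 * C * c) := by
  have hs := he.lt_succ j
  have hlt : F j < F (j + 1) := by
    rw [← he.strictMono.lt_iff_lt, hF, hF]
    exact hf.strictMono hs
  have h₁ := he.mul_le_mul_sub hC hper hlt.le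
  have h₂ := sub_le_mul_of_gap_of_le hc hs.le
  have h₃ := he.gap_le hC hn j
  rw [hF, hF] at h₁
  have h₄ : (F (j + 1) - F j) * (n : ℤ) ≤ ((C + 1) * (2 * C * c)) * n := by
    have : f (e (j + 1)) - f (e j) ≤ 2 * C * n * c := by nlinarith
    have h0 : (0 : ℤ) ≤ C + 1 := by lia
    nlinarith
  exact le_of_mul_le_mul_right h₄ (by lia)

end SameReturn

/-- A fixed point of a substitution `a ↦ τ a 0, …, τ a (ℓ a - 1)` is determined by its two
central letters. -/
lemma label_unique {D D' : ℤ → ℕ} {F F' : ℤ → ℤ} {ℓ : ℕ → ℤ} {τ : ℕ → ℕ → ℕ}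
    (hF : ∀ j, F (j + 1) - F j = ℓ (D j)) (hF' : ∀ j, F' (j + 1) - F' j = ℓ (D' j))
    (hD : ∀ j, ∀ t : ℕ, t < ℓ (D j) → D (F j + t) = τ (D j) t)
    (hD' : ∀ j, ∀ t : ℕ, t < ℓ (D' j) → D' (F' j + t) = τ (D' j) t)
    (hmono : StrictMono F) (h0 : F 0 = 0) (h0' : F' 0 = 0) (h1 : 2 ≤ F 1) (h1' : F (-1) ≤ -2)
    (hD0 : D 0 = D' 0) (hD1 : D (-1) = D' (-1)) : D = D' := by
  have hpos : ∀ k : ℕ, (k : ℤ) + 2 ≤ F (k + 1) := by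
    intro k
    have := mul_le_sub_of_gap (f := F) (c := 1) (fun j => by have := hmono (lt_add_one j); lia) k 1
    rw [add_comm (k : ℤ)]
    lia
  have hneg : ∀ k : ℕ, F (-k - 1) ≤ -k - 2 := by
    intro k
    have := mul_le_sub_of_gap (f := F) (c := 1) (fun j => by have := hmono (lt_add_one j); lia) k
      (-k - 1)
    rw [show -(k : ℤ) - 1 + k = -1 by ring] at this
    lia
  have step : ∀ j j₁ : ℤ, F j₁ ≤ j → j < F (j₁ + 1) → F j₁ = F' j₁ → D j₁ = D' j₁ → D j = D' j := by
    intro j j₁ h₁ h₂ h₃ h₄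
    have h₅ := hF j₁
    obtain ⟨t, ht⟩ := Int.le.dest h₁
    have h₆ := hD j₁ t (by lia)
    have h₇ := hD' j₁ t (by rw [← h₄]; lia)
    rw [← ht, h₆, h₃, h₇, h₄]
  have key : ∀ k : ℕ, (∀ j, -(k : ℤ) - 1 ≤ j → j ≤ k → D j = D' j) ∧
      ∀ j, -(k : ℤ) - 1 ≤ j → j ≤ k + 1 → F j = F' j := by
    intro k
    induction k with
    | zero =>
      have e₁ := hF 0
      have e₁' := hF' 0
      have e₂ := hF (-1)
      have e₂' := hF' (-1)
      rw [← hD0] at e₁'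
      rw [← hD1] at e₂'
      simp only [zero_add, Int.reduceNeg, neg_add_cancel] at e₁ e₁' e₂ e₂'
      refine ⟨fun j h₁ h₂ => ?_, fun j h₁ h₂ => ?_⟩
      · obtain rfl | rfl : j = 0 ∨ j = -1 := by push_cast at h₁ h₂; lia
        exacts [hD0, hD1]
      · obtain rfl | rfl | rfl : j = 0 ∨ j = -1 ∨ j = 1 := by push_cast at h₁ h₂; lia
        all_goals lia
    | succ k ih =>
      obtain ⟨ihD, ihF⟩ := ih
      have hDk : D (k + 1) = D' (k + 1) := by
        obtain ⟨j₁, h₁, h₂⟩ := exists_le_lt_succ hmono (k + 1)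
        have h₃ := hpos k
        have h₄ : j₁ < k + 1 := hmono.lt_iff_lt.1 (by lia)
        have h₅ : 0 < j₁ + 1 := hmono.lt_iff_lt.1 (by lia)
        exact step _ j₁ h₁ h₂ (ihF _ (by lia) (by lia)) (ihD _ (by lia) (by lia))
      have hDk' : D (-k - 2) = D' (-k - 2) := by
        obtain ⟨j₁, h₁, h₂⟩ := exists_le_lt_succ hmono (-k - 2)
        have h₃ := hneg k
        have h₄ : j₁ < 0 := hmono.lt_iff_lt.1 (by lia)
        have h₅ : -(k : ℤ) - 1 < j₁ + 1 := hmono.lt_iff_lt.1 (by lia)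
        exact step _ j₁ h₁ h₂ (ihF _ (by lia) (by lia)) (ihD _ (by lia) (by lia))
      push_cast
      refine ⟨fun j h₁ h₂ => ?_, fun j h₁ h₂ => ?_⟩
      · rcases (by lia : j = k + 1 ∨ j = -k - 2 ∨ (-(k : ℤ) - 1 ≤ j ∧ j ≤ k)) with rfl | rfl | h
        exacts [hDk, hDk', ihD _ h.1 h.2]
      · rcases (by lia : j = k + 1 + 1 ∨ j = -k - 2 ∨ (-(k : ℤ) - 1 ≤ j ∧ j ≤ k + 1))
          with rfl | rfl | h
        · have e₁ := hF (k + 1)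
          have e₂ := hF' (k + 1)
          have e₃ := ihF (k + 1) (by lia) (by lia)
          rw [← hDk] at e₂
          lia
        · have e₁ := hF (-k - 2)
          have e₂ := hF' (-k - 2)
          have e₃ := ihF (-k - 1) (by lia) (by lia)
          rw [← hDk'] at e₂
          rw [show -(k : ℤ) - 2 + 1 = -k - 1 by ring] at e₁ e₂
          lia
        · exact ihF _ h.1 h.2
  funext j
  exact (key j.natAbs).1 j (by lia) (by lia)

/-- The first point `≥ y` on the forward orbit of `x` under the increasing map `s`. -/
def firstPoint (s : ℤ → ℤ) (x y : ℤ) : ℤ :=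
  if y ≤ x ∨ s x ≤ x then x else firstPoint s (s x) y
termination_by (y - x).toNat
decreasing_by lia

section firstPoint

variable {s : ℤ → ℤ} {x y z : ℤ}

lemma firstPoint_of_le (h : y ≤ x) : firstPoint s x y = x := by
  rw [firstPoint, if_pos (Or.inl h)]

lemma firstPoint_of_lt (hs : ∀ i, i < s i) (h : x < y) :
    firstPoint s x y = firstPoint s (s x) y := by
  rw [firstPoint, if_neg]
  have := hs x
  lia

/-- Induction along the forward orbit up to the threshold `y`. -/
lemma orbit_induction (hs : ∀ i, i < s i) (y : ℤ) {P : ℤ → Prop} (hle : ∀ x, y ≤ x → P x)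
    (hlt : ∀ x, x < y → P (s x) → P x) (x : ℤ) : P x := by
  obtain ⟨n, hn⟩ : ∃ n : ℕ, (y - x).toNat = n := ⟨_, rfl⟩
  induction n using Nat.strong_induction_on generalizing x with
  | _ n ih =>
    rcases le_or_gt y x with h | h
    · exact hle x h
    · have := hs x
      exact hlt x h (ih (y - s x).toNat (by lia) (s x) rfl)

lemma le_firstPoint (hs : ∀ i, i < s i) : y ≤ firstPoint s x y := by
  induction x using orbit_induction hs y with
  | hle x h => rwa [firstPoint_of_le h]
  | hlt x h ih => rwa [firstPoint_of_lt hs h]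

lemma firstPoint_lt (hs : ∀ i, i < s i) {M : ℕ} (hM : ∀ i, s i ≤ i + M) (hx : x < y + M) :
    firstPoint s x y < y + M := by
  induction x using orbit_induction hs y with
  | hle x h => rwa [firstPoint_of_le h]
  | hlt x h ih =>
    rw [firstPoint_of_lt hs h]
    exact ih (by have := hM x; lia)

lemma firstPoint_firstPoint (hs : ∀ i, i < s i) (hyz : y ≤ z) :
    firstPoint s (firstPoint s x y) z = firstPoint s x z := by
  induction x using orbit_induction hs y with
  | hle x h => rw [firstPoint_of_le h]
  | hlt x h ih => rw [firstPoint_of_lt hs h, ih, ← firstPoint_of_lt hs (h.trans_le hyz)]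

lemma firstPoint_shift (hs : ∀ i, i < s i) {d : ℤ}
    (hd : ∀ i, x ≤ i → i < y → s (i + d) = s i + d) :
    firstPoint s (x + d) (y + d) = firstPoint s x y + d := by
  induction x using orbit_induction hs y with
  | hle x h => rw [firstPoint_of_le h, firstPoint_of_le (by lia)]
  | hlt x h ih =>
    rw [firstPoint_of_lt hs h, firstPoint_of_lt hs (by lia), hd x le_rfl h]
    exact ih fun i h₁ h₂ => hd i (by have := hs x; lia) h₂

lemma exists_iterate_eq_firstPoint (hs : ∀ i, i < s i) :
    ∃ k : ℕ, s^[k] x = firstPoint s x y := by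
  induction x using orbit_induction hs y with
  | hle x h => exact ⟨0, (firstPoint_of_le h).symm⟩
  | hlt x h ih =>
    obtain ⟨k, hk⟩ := ih
    exact ⟨k + 1, by rw [firstPoint_of_lt hs h, ← hk, Function.iterate_succ_apply]⟩

lemma le_iterate (hs : ∀ i, i < s i) (k : ℕ) (x : ℤ) : x + k ≤ s^[k] x := by
  induction k with
  | zero => simp
  | succ k ih =>
    rw [Function.iterate_succ_apply']
    have := hs (s^[k] x)
    push_cast
    lia

lemma iterate_le {M : ℕ} (hM : ∀ i, s i ≤ i + M) (k : ℕ) (x : ℤ) : s^[k] x ≤ x + M * k := by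
  induction k with
  | zero => simp
  | succ k ih =>
    rw [Function.iterate_succ_apply']
    have := hM (s^[k] x)
    push_cast
    linarith

lemma iterate_lt_iterate (hs : ∀ i, i < s i) (x : ℤ) : StrictMono fun k : ℕ => s^[k] x :=
  strictMono_nat_of_lt_succ fun k => by
    rw [Function.iterate_succ_apply']
    exact hs _

lemma firstPoint_eq_iff (hs : ∀ i, i < s i) :
    x ≤ y → (firstPoint s x y = y ↔ ∃ k : ℕ, s^[k] x = y) := by
  refine fun _ => ⟨fun h => ?_, ?_⟩
  · obtain ⟨k, hk⟩ := exists_iterate_eq_firstPoint (x := x) (y := y) hs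
    exact ⟨k, hk.trans h⟩
  · rintro ⟨k, rfl⟩
    induction k generalizing x with
    | zero => exact firstPoint_of_le le_rfl
    | succ k ih =>
      rw [Function.iterate_succ_apply]
      have h := le_iterate hs k (s x)
      rw [firstPoint_of_lt hs (by have := hs x; lia)]
      exact ih (by lia)

end firstPoint

/-- The position, relative to `e (j + 1)`, at which the strand through `e j + a` first reaches
`[e (j + 1), ∞)`. -/
def crossing (s e : ℤ → ℤ) (j a : ℤ) : ℤ := firstPoint s (e j + a) (e (j + 1)) - e (j + 1)

section crossing

variable {s e e' : ℤ → ℤ} {M : ℕ}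

lemma crossing_nonneg (hs : ∀ i, i < s i) (j a : ℤ) : 0 ≤ crossing s e j a :=
  sub_nonneg.2 (le_firstPoint hs)

lemma crossing_lt (hs : ∀ i, i < s i) (hM : ∀ i, s i ≤ i + M) (he : StrictMono e) (j : ℤ) {a : ℤ}
    (ha : a < M) : crossing s e j a < M := by
  have h := he (lt_add_one j)
  have := firstPoint_lt hs hM (x := e j + a) (y := e (j + 1)) (by lia)
  unfold crossing
  lia

/-- Crossings over several return words are determined by those over single return words. -/
lemma firstPoint_sub_eq (hs : ∀ i, i < s i) (hM : ∀ i, s i ≤ i + M) (he : StrictMono e)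
    (he' : StrictMono e')
    (hcr : ∀ j a : ℤ, 0 ≤ a → a < M → crossing s e j a = crossing s e' j a) (j : ℤ) (k : ℕ) {a : ℤ}
    (h0 : 0 ≤ a) (ha : a < M) :
    firstPoint s (e j + a) (e (j + k)) - e (j + k) =
      firstPoint s (e' j + a) (e' (j + k)) - e' (j + k) := by
  induction k with
  | zero => simp [firstPoint_of_le, h0]
  | succ k ih =>
    have h₁ : e (j + k) < e (j + k + 1) := he (lt_add_one _)
    have h₂ : e' (j + k) < e' (j + k + 1) := he' (lt_add_one _)
    have h₃ : e j ≤ e (j + k) := he.monotone (by lia)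
    have h₄ := le_firstPoint (x := e j + a) (y := e (j + k)) hs
    have h₅ := firstPoint_lt hs hM (x := e j + a) (y := e (j + k)) (by lia)
    have h₆ := hcr (j + k) (firstPoint s (e j + a) (e (j + k)) - e (j + k)) (by lia) (by lia)
    unfold crossing at h₆
    rw [add_sub_cancel, firstPoint_firstPoint hs h₁.le, ih, add_sub_cancel,
      firstPoint_firstPoint hs h₂.le] at h₆
    push_cast
    rwa [← add_assoc]

/-- If the crossings coincide, so do the traces of the orbits of `s` on both enumerated sets. -/
lemma exists_iterate_eq_iff (hs : ∀ i, i < s i) (hM : ∀ i, s i ≤ i + M) (he : StrictMono e)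
    (he' : StrictMono e')
    (hcr : ∀ j a : ℤ, 0 ≤ a → a < M → crossing s e j a = crossing s e' j a) {j j' : ℤ}
    (hj : j ≤ j') :
    (∃ k : ℕ, s^[k] (e j) = e j') ↔ ∃ k : ℕ, s^[k] (e' j) = e' j' := by
  rw [← firstPoint_eq_iff hs (he.monotone hj), ← firstPoint_eq_iff hs (he'.monotone hj)]
  obtain ⟨k, rfl⟩ := Int.le.dest hj
  have hM0 : (0 : ℤ) < M := by have h₁ := hs 0; have h₂ := hM 0; lia
  have := firstPoint_sub_eq hs hM he he' hcr j k le_rfl hM0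
  rw [add_zero, add_zero] at this
  lia

end crossing

lemma SameReturn.crossing_eq {A : Type*} {ω : ℤ → A} {n K : ℕ} {e s : ℤ → ℤ} {j j' : ℤ}
    (h : SameReturn ω n e j j') (hs : ∀ i, i < s i)
    (hloc : ∀ i i', Agree ω i i' (-K) K → s i - i = s i' - i') (hK : K ≤ n) {a : ℤ} (ha : 0 ≤ a) :
    crossing s e j a = crossing s e j' a := by
  have h₁ := firstPoint_shift (x := e j + a) (y := e (j + 1)) (d := e j' - e j) hs (by
    intro i h₁ h₂
    have hag := (h.2.shift (i - e j)).mono (a' := -K) (b' := K) (by lia) (by lia)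
    have := hloc _ _ hag
    rw [show e j + (i - e j) = i by ring, show e j' + (i - e j) = i + (e j' - e j) by ring] at this
    lia)
  have h₂ := h.1
  unfold crossing
  rw [show e j' + a = e j + a + (e j' - e j) by ring,
    show e (j' + 1) = e (j + 1) + (e j' - e j) by lia, h₁]
  ring

section Label

variable {A : Type*} {ω : ℤ → A} {n : ℕ} {e : ℤ → ℤ} {j j' : ℤ}

/-- The index of the first nonnegative return with the same return word. -/
noncomputable def label (ω : ℤ → A) (n : ℕ) (e : ℤ → ℤ) (j : ℤ) : ℕ :=
  sInf {k : ℕ | SameReturn ω n e k j}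

lemma SameReturn.label_eq (h : SameReturn ω n e j j') : label ω n e j = label ω n e j' := by
  unfold label
  congr 1
  ext k
  exact ⟨fun hk => hk.trans h, fun hk => hk.trans h.symm⟩

end Label

/-- The finite description of a derived sequence: central letters, lengths and words of the return
substitution, and crossings. -/
abbrev ReturnData (N B M : ℕ) : Type :=
  Fin N × Fin N × (Fin N → Fin B) × (Fin N → Fin B → Fin N) × (Fin N → Fin M → Fin M)

/-- The finite description associated with the enumeration `e`. -/
noncomputable def returnData {A : Type*} (N B M : ℕ) [NeZero N] [NeZero B] [NeZero M] (ω : ℤ → A)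
    (n : ℕ) (e F s : ℤ → ℤ) : ReturnData N B M :=
  (Fin.ofNat N (label ω n e 0), Fin.ofNat N (label ω n e (-1)),
    fun a => Fin.ofNat B (F ((a : ℕ) + 1) - F (a : ℕ)).toNat,
    fun a t => Fin.ofNat N (label ω n e (F (a : ℕ) + (t : ℕ))),
    fun a b => Fin.ofNat M (crossing s e (a : ℕ) (b : ℕ)).toNat)

lemma eq_of_ofNat_eq {N a b : ℕ} [NeZero N] (ha : a < N) (hb : b < N)
    (h : Fin.ofNat N a = Fin.ofNat N b) : a = b := by
  have := congrArg Fin.val h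
  rwa [Fin.val_ofNat, Fin.val_ofNat, Nat.mod_eq_of_lt ha, Nat.mod_eq_of_lt hb] at this

/-- An enumeration of occurrences together with uniform bounds on its return substitution. -/
structure BoundedReturns {A : Type*} (ω : ℤ → A) (n N B : ℕ) (e f F : ℤ → ℤ) : Prop where
  enum : Enum ω n e
  index : ∀ j, e (F j) = f (e j)
  label_lt : ∀ j, label ω n e j < N
  sameReturn_label : ∀ j, SameReturn ω n e (label ω n e j) j
  gap_lt : ∀ j, F (j + 1) - F j < B

namespace BoundedReturns

variable {A : Type*} {ω : ℤ → A} {n m N B : ℕ} {e e' f F F' s : ℤ → ℤ}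

lemma index_zero (h : BoundedReturns ω n N B e f F) (hf : Inflation ω f) : F 0 = 0 :=
  h.enum.strictMono.injective (by rw [h.index, h.enum.zero, hf.zero])

lemma index_strictMono (h : BoundedReturns ω n N B e f F) (hf : Inflation ω f) : StrictMono F :=
  fun a b hab => by
    rw [← h.enum.strictMono.lt_iff_lt, h.index, h.index]
    exact hf.strictMono (h.enum.strictMono hab)

lemma two_le_index_one (h : BoundedReturns ω n N B e f F) (hf : Inflation ω f)
    (h2 : ∀ j, 2 ≤ f (j + 1) - f j) : 2 ≤ F 1 := by
  have h₁ : e 0 < e 1 := h.enum.strictMono one_pos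
  have h₂ := mul_le_sub_of_gap_of_le h2 h₁.le
  rw [h.enum.zero, hf.zero] at *
  have h₃ : e 1 < e (F 1) := by rw [h.index]; lia
  have := h.enum.strictMono.lt_iff_lt.1 h₃
  lia

lemma index_neg_one_le (h : BoundedReturns ω n N B e f F) (hf : Inflation ω f)
    (h2 : ∀ j, 2 ≤ f (j + 1) - f j) : F (-1) ≤ -2 := by
  have h₁ : e (-1) < e 0 := h.enum.strictMono (by simp)
  have h₂ := mul_le_sub_of_gap_of_le h2 h₁.le
  rw [h.enum.zero, hf.zero] at *
  have h₃ : e (F (-1)) < e (-1) := by rw [h.index]; lia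
  have := h.enum.strictMono.lt_iff_lt.1 h₃
  lia

lemma gap_label (h : BoundedReturns ω n N B e f F) (hf : Inflation ω f) (j : ℤ) :
    F (j + 1) - F j = F (label ω n e j + 1) - F (label ω n e j) :=
  ((h.sameReturn_label j).image h.enum hf h.index).1.symm

lemma label_index (h : BoundedReturns ω n N B e f F) (hf : Inflation ω f) (j : ℤ) (t : ℕ)
    (ht : t < F (label ω n e j + 1) - F (label ω n e j)) :
    label ω n e (F j + t) = label ω n e (F (label ω n e j) + t) :=
  (((h.sameReturn_label j).image h.enum hf h.index).2 t ht).label_eq.symm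

lemma label_eq_iff (h : BoundedReturns ω n N B e f F) {j j' : ℤ} :
    label ω n e j = label ω n e j' ↔ SameReturn ω n e j j' := by
  refine ⟨fun hl => ?_, SameReturn.label_eq⟩
  have := h.sameReturn_label j
  rw [hl] at this
  exact this.symm.trans (h.sameReturn_label j')

/-- The finite description determines the derived sequence. -/
lemma label_eq_of_returnData_eq [NeZero N] [NeZero B] {M : ℕ} [NeZero M]
    (h : BoundedReturns ω n N B e f F) (h' : BoundedReturns ω m N B e' f F')
    (hf : Inflation ω f) (h2 : ∀ j, 2 ≤ f (j + 1) - f j)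
    (heq : returnData N B M ω n e F s = returnData N B M ω m e' F' s) :
    label ω n e = label ω m e' := by
  simp only [returnData, Prod.mk.injEq, funext_iff] at heq
  obtain ⟨d₀, d₁, dℓ, dτ, -⟩ := heq
  have hpos : ∀ j, 0 < F (j + 1) - F j := fun j => by
    have := h.index_strictMono hf (lt_add_one j); lia
  have hpos' : ∀ j, 0 < F' (j + 1) - F' j := fun j => by
    have := h'.index_strictMono hf (lt_add_one j); lia
  have hℓ : ∀ a : ℕ, a < N → F (a + 1) - F a = F' (a + 1) - F' a := by
    intro a ha
    have b₁ := h.gap_lt a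
    have b₂ := h'.gap_lt a
    have p₁ := hpos a
    have p₂ := hpos' a
    have := eq_of_ofNat_eq (by lia) (by lia) (dℓ ⟨a, ha⟩)
    dsimp only at *
    lia
  refine label_unique (F := F) (F' := F') (ℓ := fun a => F (a + 1) - F a)
    (τ := fun a t => label ω n e (F a + t)) (h.gap_label hf) (fun j => ?_) (h.label_index hf)
    (fun j t ht => ?_) (h.index_strictMono hf) (h.index_zero hf) (h'.index_zero hf)
    (h.two_le_index_one hf h2) (h.index_neg_one_le hf h2)
    (eq_of_ofNat_eq (h.label_lt _) (h'.label_lt _) d₀)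
    (eq_of_ofNat_eq (h.label_lt _) (h'.label_lt _) d₁)
  · rw [h'.gap_label hf, hℓ _ (h'.label_lt j)]
  · have hN := h'.label_lt j
    have b₁ := h.gap_lt (label ω m e' j)
    rw [h'.label_index hf j t (by rwa [hℓ _ hN] at ht)]
    exact (eq_of_ofNat_eq (h.label_lt _) (h'.label_lt _)
      (dτ ⟨label ω m e' j, hN⟩ ⟨t, by lia⟩)).symm

lemma crossing_eq_of_returnData_eq [NeZero N] [NeZero B] {M K : ℕ} [NeZero M]
    (h : BoundedReturns ω n N B e f F) (h' : BoundedReturns ω m N B e' f F')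
    (hlab : label ω n e = label ω m e') (hs : ∀ i, i < s i) (hM : ∀ i, s i ≤ i + M)
    (hloc : ∀ i i', Agree ω i i' (-K) K → s i - i = s i' - i') (hKn : K ≤ n) (hKm : K ≤ m)
    (heq : returnData N B M ω n e F s = returnData N B M ω m e' F' s)
    (j a : ℤ) (h0 : 0 ≤ a) (ha : a < M) : crossing s e j a = crossing s e' j a := by
  simp only [returnData, Prod.mk.injEq, funext_iff] at heq
  obtain ⟨-, -, -, -, dγ⟩ := heq
  have r₁ := (h.sameReturn_label j).crossing_eq hs hloc hKn h0
  have r₂ := (h'.sameReturn_label j).crossing_eq hs hloc hKm h0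
  rw [← hlab] at r₂
  rw [← r₁, ← r₂]
  lift a to ℕ using h0
  have c₁ := crossing_lt hs hM h.enum.strictMono (label ω n e j) ha
  have c₂ := crossing_lt hs hM h'.enum.strictMono (label ω n e j) ha
  have c₃ := crossing_nonneg (e := e) hs (label ω n e j) a
  have c₄ := crossing_nonneg (e := e') hs (label ω n e j) a
  have := eq_of_ofNat_eq (by lia) (by lia) (dγ ⟨label ω n e j, h.label_lt j⟩ ⟨a, by lia⟩)
  dsimp only at this
  lia

end BoundedReturns

lemma LinRec.exists_boundedReturns {A : Type*} {ω : ℤ → A} {C c n : ℕ} {f : ℤ → ℤ}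
    (hC : LinRec ω C) (hf : Inflation ω f) (hc : ∀ j, f (j + 1) - f j ≤ c)
    (hper : ∀ q : ℕ, 0 < q → ∃ t, ω (t + q) ≠ ω t) (hn : 1 ≤ n) :
    ∃ e F, BoundedReturns ω n ((C + 1) * (C * (2 * C + 2) + 1) + 1) ((C + 1) * (2 * C * c) + 1)
      e f F := by
  obtain ⟨e, he⟩ := hC.exists_enum hn
  obtain ⟨F, hF⟩ := he.exists_index_map hf
  refine ⟨e, F, he, hF, fun j => ?_, fun j => ?_, fun j => ?_⟩
  · obtain ⟨k, hk, hk'⟩ := he.exists_sameReturn hC hper hn j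
    exact Nat.lt_succ_of_le ((Nat.sInf_le hk').trans hk)
  · obtain ⟨k, -, hk'⟩ := he.exists_sameReturn hC hper hn j
    exact Nat.sInf_mem (s := {k : ℕ | SameReturn ω n e k j}) ⟨k, hk'⟩
  · have := he.index_gap_le hF hf hC hc hper hn j
    push_cast
    lia

/-- There are two radii whose derived sequences, together with the crossings of `s`, coincide, and
such that the returns for the second are much longer than those for the first. -/
lemma exists_equivalent_returns {A : Type*} [Finite A] {ω : ℤ → A} {f s : ℤ → ℤ} {D M K : ℕ}
    (hf : Inflation ω f) (h2 : ∀ j, 2 ≤ f (j + 1) - f j)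
    (hD : ∀ i i₀ : ℤ, ∃ i', i₀ ≤ i' ∧ i' < i₀ + D ∧ Agree ω i i' 0 2)
    (hper : ∀ q : ℕ, 0 < q → ∃ t, ω (t + q) ≠ ω t)
    (hs : ∀ i, i < s i) (hM : ∀ i, s i ≤ i + M)
    (hloc : ∀ i i', Agree ω i i' (-K) K → s i - i = s i' - i') :
    ∃ (n m G G' : ℕ) (e e' : ℤ → ℤ), Enum ω n e ∧ Enum ω m e' ∧
      (∀ j j', SameReturn ω n e j j' ↔ SameReturn ω m e' j j') ∧
      (∀ j j' : ℤ, j ≤ j' → ((∃ k : ℕ, s^[k] (e j) = e j') ↔ ∃ k : ℕ, s^[k] (e' j) = e' j')) ∧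
      (∀ j, e (j + 1) - e j ≤ G) ∧ (∀ j, e' (j + 1) - e' j ≤ G') ∧
      ∀ j, M * G < e' (j + 1) - e' j := by
  obtain ⟨C, hC⟩ := hf.exists_linRec h2 hD
  obtain ⟨c, hc⟩ := hf.exists_gap_le
  have hM0 : M ≠ 0 := by rintro rfl; have h₁ := hs 0; have h₂ := hM 0; simp at h₂; lia
  have : NeZero M := ⟨hM0⟩
  have hex : ∀ n : ℕ, ∃ e F, BoundedReturns ω (n + K + 1)
      ((C + 1) * (C * (2 * C + 2) + 1) + 1) ((C + 1) * (2 * C * c) + 1) e f F := fun n =>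
    hC.exists_boundedReturns hf hc hper (by lia)
  choose e F h using hex
  obtain ⟨d, hd⟩ := Finite.exists_infinite_fiber fun n =>
    returnData ((C + 1) * (C * (2 * C + 2) + 1) + 1) ((C + 1) * (2 * C * c) + 1) M ω (n + K + 1)
      (e n) (F n) s
  have hinf := Set.infinite_coe_iff.1 hd
  obtain ⟨n, hn⟩ := hinf.nonempty
  obtain ⟨m, hm, hlt⟩ := hinf.exists_gt ((C + 1) * (M * (2 * C * (n + K + 1))))
  have heq := hn.trans hm.symm
  have hlab := (h n).label_eq_of_returnData_eq (h m) hf h2 heq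
  refine ⟨n + K + 1, m + K + 1, 2 * C * (n + K + 1), 2 * C * (m + K + 1), e n, e m,
    (h n).enum, (h m).enum, fun j j' => ?_, fun j j' hj => ?_, fun j => ?_, fun j => ?_, fun j => ?_⟩
  · rw [← (h n).label_eq_iff, ← (h m).label_eq_iff, hlab]
  · exact exists_iterate_eq_iff hs hM (h n).enum.strictMono (h m).enum.strictMono
      ((h n).crossing_eq_of_returnData_eq (h m) hlab hs hM hloc (by lia) (by lia) heq) hj
  · exact_mod_cast (h n).enum.gap_le hC (by lia) j
  · exact_mod_cast (h m).enum.gap_le hC (by lia) j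
  · have h₁ := (h m).enum.lt_mul_gap hC hper j
    have h₂ : ((C : ℤ) + 1) * (M * (2 * C * (n + K + 1))) < m := by exact_mod_cast hlt
    push_cast at h₁ ⊢
    exact lt_of_mul_lt_mul_left (by linarith : ((C : ℤ) + 1) * _ < (C + 1) * _) (by lia)

section Coincidence

variable {A : Type*} {ω : ℤ → A} {n m G : ℕ} {e e' : ℤ → ℤ}

/-- Long agreement forces many common return words. -/
lemma Enum.sameReturn_near (he : Enum ω n e) (hG : ∀ j, e (j + 1) - e j ≤ G) (k : ℕ) {j j' : ℤ}
    (h : Agree ω (e j) (e j') (-(n + k * G : ℤ)) (n + k * G)) {t : ℤ} (h₁ : -k ≤ t) (h₂ : t < k) :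
    SameReturn ω n e (j + t) (j' + t) := by
  induction k generalizing j j' t with
  | zero => exact absurd h₁ (by simpa using h₂)
  | succ k ih =>
    have hkG : (0 : ℤ) ≤ k * G := by positivity
    have hk : ((k + 1 : ℕ) : ℤ) * G = k * G + G := by push_cast; ring
    rw [hk] at h
    have g₁ := hG j
    have g₂ := hG (j - 1)
    rw [sub_add_cancel] at g₂
    have s₁ := he.lt_succ j
    have s₂ := he.lt_succ (j - 1)
    rw [sub_add_cancel] at s₂
    have r₀ : SameReturn ω n e j j' :=
      he.sameReturn (h.mono (a' := -n) (by lia) le_rfl) (by lia)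
    have gp := he.gap_pred_eq (h.mono (b' := n) le_rfl (by lia)) (by lia)
    have a₁ := h.shift (e (j + 1) - e j)
    rw [add_sub_cancel, r₀.1, add_sub_cancel] at a₁
    rw [r₀.1] at g₁
    have a₂ := h.shift (e (j - 1) - e j)
    rw [add_sub_cancel, show e j' + (e (j - 1) - e j) = e (j' - 1) by lia] at a₂
    have s₁' := he.lt_succ j'
    have r₁ : SameReturn ω n e (j - 1) (j' - 1) :=
      he.sameReturn (a₂.mono (a' := -n) (by lia) le_rfl) (by rw [sub_add_cancel]; lia)
    push_cast at h₁ h₂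
    rcases lt_trichotomy t 0 with ht | rfl | ht
    · rcases eq_or_ne t (-1) with rfl | ht'
      · exact r₁
      · have := ih (j := j - 1) (j' := j' - 1) (t := t + 1) (a₂.mono (by lia) (by lia)) (by lia)
          (by lia)
        rwa [show j - 1 + (t + 1) = j + t by ring, show j' - 1 + (t + 1) = j' + t by ring] at this
    · simpa using r₀
    · have := ih (j := j + 1) (j' := j' + 1) (t := t - 1) (a₁.mono (by lia) (by lia)) (by lia)
        (by lia)
      rwa [show j + 1 + (t - 1) = j + t by ring, show j' + 1 + (t - 1) = j' + t by ring] at this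

lemma Enum.agree_forward (he : Enum ω n e) (k : ℕ) {j j' : ℤ}
    (h : ∀ t : ℤ, 0 ≤ t → t < k → SameReturn ω n e (j + t) (j' + t)) :
    Agree ω (e j) (e j') 0 k := by
  induction k generalizing j j' with
  | zero => exact fun t h₁ h₂ => absurd h₁ (by simpa using h₂)
  | succ k ih =>
    push_cast at h
    have r₀ := h 0 le_rfl (by lia)
    have a := ih (j := j + 1) (j' := j' + 1) fun t h₁ h₂ => by
      have := h (1 + t) (by lia) (by lia)
      rwa [← add_assoc, ← add_assoc] at this
    have s₀ := he.lt_succ j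
    simp only [add_zero] at r₀
    have a' := a.shift (e j - e (j + 1))
    rw [add_sub_cancel, show e (j' + 1) + (e j - e (j + 1)) = e j' by have := r₀.1; lia] at a'
    intro t h₁ h₂
    push_cast at h₂
    rcases lt_or_ge t (e (j + 1) - e j) with ht | ht
    · exact r₀.2 t (by lia) (by lia)
    · exact a' t (by lia) (by lia)

lemma Enum.agree_backward (he : Enum ω n e) (k : ℕ) {j j' : ℤ}
    (h : ∀ t : ℤ, -k ≤ t → t < 0 → SameReturn ω n e (j + t) (j' + t)) :
    Agree ω (e j) (e j') (-k) 0 := by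
  induction k generalizing j j' with
  | zero => exact fun t h₁ h₂ => absurd h₁ (by simpa using h₂)
  | succ k ih =>
    push_cast at h
    have r₀ := h (-1) (by lia) (by lia)
    have a := ih (j := j - 1) (j' := j' - 1) fun t h₁ h₂ => by
      have := h (-1 + t) (by lia) (by lia)
      rwa [← add_assoc, ← add_assoc] at this
    have s₀ := he.lt_succ (j - 1)
    simp only [SameReturn, ← sub_eq_add_neg, sub_add_cancel] at r₀ s₀
    have a' := a.shift (e j - e (j - 1))
    have r' := r₀.2.shift (e j - e (j - 1))
    rw [add_sub_cancel, show e (j' - 1) + (e j - e (j - 1)) = e j' by have := r₀.1; lia] at a' r'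
    intro t h₁ h₂
    push_cast at h₁
    rcases lt_or_ge t (e (j - 1) - e j) with ht | ht
    · exact a' t (by lia) (by lia)
    · exact r' t (by lia) (by lia)

/-- Two enumerations with the same pattern of return words carry long agreements of the first to
long agreements of the second. -/
lemma Enum.exists_agree_imp (he : Enum ω n e) (he' : Enum ω m e')
    (hG : ∀ j, e (j + 1) - e j ≤ G)
    (h : ∀ j j', SameReturn ω n e j j' → SameReturn ω m e' j j') (L : ℕ) :
    ∃ L' : ℕ, ∀ j j', Agree ω (e j) (e j') (-L') L' → Agree ω (e' j) (e' j') (-L) L := by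
  refine ⟨n + L * G, fun j j' hj => ?_⟩
  push_cast at hj
  have hr : ∀ t : ℤ, -L ≤ t → t < L → SameReturn ω m e' (j + t) (j' + t) := fun t h₁ h₂ =>
    h _ _ (he.sameReturn_near hG L hj h₁ h₂)
  have a₁ := he'.agree_forward L fun t h₁ h₂ => hr t (by lia) h₂
  have a₂ := he'.agree_backward L fun t h₁ h₂ => hr t h₁ (by lia)
  intro t h₁ h₂
  rcases lt_or_ge t 0 with ht | ht
  · exact a₂ t h₁ ht
  · exact a₁ t ht h₂

end Coincidence

section Towers

variable {X : Type*}

/-- `k` is the first positive time at which the `S`-orbit of `x` enters `V`. -/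
structure FirstReturn (S : Equiv.Perm X) (V : Set X) (x : X) (k : ℕ) : Prop where
  pos : 1 ≤ k
  mem : (S ^ k) x ∈ V
  notMem : ∀ n, 1 ≤ n → n < k → (S ^ n) x ∉ V

/-- The part of the base `V` whose tower reaches above level `a`. -/
def towerBase (S : Equiv.Perm X) (V : Set X) (a : ℕ) : Set X :=
  {b ∈ V | ∀ n, 1 ≤ n → n ≤ a → (S ^ n) b ∉ V}

section Tower

variable {S : Equiv.Perm X} {V V' : Set X} {g : X → X}

lemma FirstReturn.lt_of_mem_towerBase {b : X} {r a : ℕ} (h : FirstReturn S V b r)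
    (hb : b ∈ towerBase S V a) : a < r := by
  by_contra! hle
  exact hb.2 r h.pos hle h.mem

lemma pow_apply_eq_sub {a c : ℕ} {b b' : X} (hac : a ≤ c) (h : (S ^ c) b = (S ^ a) b') :
    (S ^ (c - a)) b = b' := by
  rw [← Nat.add_sub_cancel' hac, pow_add, Equiv.Perm.mul_apply] at h
  exact (S ^ a).injective h

/-- Two towers over `V`, the second with longer columns, match up to the height of the first. -/
lemma eq_of_pow_eq (hg : Set.InjOn g V) (hmaps : Set.MapsTo g V V')
    (hret : ∀ b ∈ V, ∃ r r', FirstReturn S V b r ∧ FirstReturn S V' (g b) r' ∧ r < r' ∧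
      g ((S ^ r) b) = (S ^ r') (g b))
    {b b' : X} {a c r' : ℕ} (hb : b ∈ V) (hr' : FirstReturn S V' (g b) r') (hc : c < r')
    (hb' : b' ∈ towerBase S V a) (h : (S ^ c) (g b) = (S ^ a) (g b')) : a = c ∧ b' = b := by
  rcases lt_trichotomy a c with hac | rfl | hac
  · have := pow_apply_eq_sub hac.le h
    exact absurd (this ▸ hmaps hb'.1) (hr'.notMem _ (by lia) (by lia))
  · exact ⟨rfl, (hg hb hb'.1 ((S ^ a).injective h)).symm⟩
  · have := pow_apply_eq_sub hac.le h.symm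
    obtain ⟨r, r'', h₁, h₂, h₃, -⟩ := hret b' hb'.1
    have := h₁.lt_of_mem_towerBase hb'
    exact absurd (by rw [pow_apply_eq_sub hac.le h.symm]; exact hmaps hb)
      (h₂.notMem (a - c) (by lia) (by lia))

lemma exists_mem_towerBase (hback : ∀ x, ∃ a : ℕ, ∃ b ∈ V, (S ^ a) b = x) (x : X) :
    ∃ a, ∃ b ∈ towerBase S V a, (S ^ a) b = x := by
  classical
  let a := Nat.find (hback x)
  obtain ⟨b, hb, hx⟩ := Nat.find_spec (hback x)
  refine ⟨a, b, ⟨hb, fun n h₁ h₂ hn => ?_⟩, hx⟩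
  refine Nat.find_min (hback x) (m := a - n) (by lia) ⟨_, hn, ?_⟩
  rw [← Equiv.Perm.mul_apply, ← pow_add, Nat.sub_add_cancel h₂]
  exact hx

lemma towerBase_unique {a a' : ℕ} {b b' : X} (hb : b ∈ towerBase S V a)
    (hb' : b' ∈ towerBase S V a') (h : (S ^ a) b = (S ^ a') b') : a = a' ∧ b = b' := by
  rcases lt_trichotomy a a' with hac | rfl | hac
  · exact absurd (by rw [pow_apply_eq_sub hac.le h.symm]; exact hb.1)
      (hb'.2 (a' - a) (by lia) (by lia))
  · exact ⟨rfl, (S ^ a).injective h⟩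
  · exact absurd (by rw [pow_apply_eq_sub hac.le h]; exact hb'.1)
      (hb.2 (a - a') (by lia) (by lia))

variable [TopologicalSpace X]

lemma isClopen_towerBase (hS : Continuous S) (hV : IsClopen V) (a : ℕ) :
    IsClopen (towerBase S V a) := by
  have : towerBase S V a = V ∩ ⋂ n ∈ Finset.Icc 1 a, (S ^ n) ⁻¹' Vᶜ := by
    ext b
    simp [towerBase, Set.mem_iInter]
  rw [this]
  refine hV.inter (isClopen_biInter_finset fun n _ => hV.compl.preimage ?_)
  rw [Equiv.Perm.coe_pow]
  exact hS.iterate n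

/-- If the return systems to `V` and `V'` are conjugate and returns to `V'` are
longer, then `S` is conjugate to its first return map to a proper clopen set. -/
theorem exists_selfInduced [CompactSpace X] [T2Space X] [Nonempty X]
    (hS : Continuous S) (hV : IsClopen V) (hV' : IsClopen V')
    (hgc : ContinuousOn g V) (hg : Set.BijOn g V V')
    (hback : ∀ x, ∃ a : ℕ, ∃ b ∈ V, (S ^ a) b = x)
    (hret : ∀ b ∈ V, ∃ r r', FirstReturn S V b r ∧ FirstReturn S V' (g b) r' ∧ r < r' ∧
      g ((S ^ r) b) = (S ^ r') (g b)) :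
    ∃ U : Set X, IsClopen U ∧ U.Nonempty ∧ U ≠ Set.univ ∧
      ∃ (φ : X ≃ₜ ↥U) (r : ↥U → ℕ),
        (∀ y : ↥U, 1 ≤ r y ∧ (S ^ r y) (y : X) ∈ U ∧
          ∀ n : ℕ, 1 ≤ n → n < r y → (S ^ n) (y : X) ∉ U) ∧
        ∀ x : X, ((φ (S x) : ↥U) : X) = (S ^ r (φ x)) ((φ x : ↥U) : X) := by
  choose a b hb hab using exists_mem_towerBase hback
  let F : X → X := fun x => (S ^ a x) (g (b x))
  have hF : ∀ {k : ℕ} {c : X}, c ∈ towerBase S V k → F ((S ^ k) c) = (S ^ k) (g c) := by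
    intro k c hc
    obtain ⟨h₁, h₂⟩ := towerBase_unique (hb ((S ^ k) c)) hc (hab _)
    simp only [F, h₁, h₂]
  have key := fun {b b' : X} {a c r' : ℕ} => eq_of_pow_eq hg.injOn hg.mapsTo hret (b := b)
    (b' := b') (a := a) (c := c) (r' := r')
  have hmem : ∀ {k : ℕ} {c : X} {r' : ℕ}, c ∈ V → FirstReturn S V' (g c) r' → k < r' →
      (S ^ k) (g c) ∈ Set.range F → c ∈ towerBase S V k := by
    rintro k c r' hc hr' hk ⟨x, hx⟩
    obtain ⟨h₁, h₂⟩ := key hc hr' hk (hb x) hx.symm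
    rw [← h₁, ← h₂]
    exact hb x
  have hpow' : ∀ k : ℕ, Continuous (S ^ k) := fun k => by
    rw [Equiv.Perm.coe_pow]
    exact hS.iterate k
  have hpow : ∀ k : ℕ, IsOpenMap (S ^ k) := fun k =>
    (Continuous.homeoOfEquivCompactToT2 (f := S ^ k) (hpow' k)).isOpenMap
  have hinj : Function.Injective F := by
    intro x x' hxx
    obtain ⟨r, r', h₁, h₂, h₃, -⟩ := hret _ (hb x).1
    have hlt := h₁.lt_of_mem_towerBase (hb x)
    obtain ⟨e₁, e₂⟩ := key (hb x).1 h₂ (hlt.trans h₃) (hb x') hxx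
    rw [← hab x, ← hab x', e₁, e₂]
  have hcont : Continuous F := by
    refine continuous_iff_continuousAt.2 fun x => ?_
    have hO := hpow (a x) _ (isClopen_towerBase hS hV (a x)).isOpen
    have hx : x ∈ (S ^ a x : Equiv.Perm X) '' towerBase S V (a x) := ⟨b x, hb x, hab x⟩
    let σ : X ≃ₜ X := Continuous.homeoOfEquivCompactToT2 (f := S ^ a x) (hpow' _)
    have hσ : ContinuousAt (fun y => σ (g (σ.symm y))) x := by
      refine σ.continuous.continuousAt.comp (ContinuousAt.comp ?_ σ.symm.continuous.continuousAt)
      refine hgc.continuousAt (hV.isOpen.mem_nhds ?_)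
      rw [(σ.symm_apply_eq (x := b x)).2 (hab x).symm]
      exact (hb x).1
    refine hσ.congr (Filter.eventuallyEq_of_mem (hO.mem_nhds hx) ?_)
    rintro _ ⟨c, hc, rfl⟩
    rw [hF hc]
    exact congrArg (fun z => σ (g z)) (σ.symm_apply_apply c)
  have hopen : IsOpen (Set.range F) := by
    have : Set.range F = ⋃ k : ℕ, (S ^ k : Equiv.Perm X) '' (g '' towerBase S V k) := by
      ext y
      simp only [Set.mem_range, Set.mem_iUnion, Set.mem_image, exists_exists_and_eq_and]
      constructor
      · rintro ⟨x, rfl⟩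
        exact ⟨a x, b x, hb x, rfl⟩
      · rintro ⟨k, c, hc, rfl⟩
        exact ⟨_, hF hc⟩
    rw [this]
    refine isOpen_iUnion fun k => hpow k _ ?_
    have hcl : IsClosed (g '' (V \ towerBase S V k)) :=
      (((hV.diff (isClopen_towerBase hS hV k)).isClosed.isCompact).image_of_continuousOn
        (hgc.mono Set.sdiff_subset)).isClosed
    have : g '' towerBase S V k = V' \ g '' (V \ towerBase S V k) := by
      rw [← hg.image_eq, ← hg.injOn.image_sdiff_subset Set.sdiff_subset, Set.sdiff_sdiff_right_self,
        Set.inter_eq_right.2 fun x hx => hx.1]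
    rw [this]
    exact hV'.isOpen.sdiff hcl
  have hstep : ∀ x, ∃ k, FirstReturn S (Set.range F) (F x) k ∧ F (S x) = (S ^ k) (F x) := by
    intro x
    obtain ⟨r, r', h₁, h₂, h₃, h₄⟩ := hret _ (hb x).1
    have hlt := h₁.lt_of_mem_towerBase (hb x)
    have hSx : S x = (S ^ (a x + 1)) (b x) := by
      rw [pow_succ', Equiv.Perm.mul_apply, hab]
    have hadd : ∀ n, (S ^ n) (F x) = (S ^ (n + a x)) (g (b x)) := fun n => by
      rw [pow_add, Equiv.Perm.mul_apply]
    rcases (Nat.succ_le_of_lt hlt).lt_or_eq with hlt' | heq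
    · have hk : b x ∈ towerBase S V (a x + 1) :=
        ⟨(hb x).1, fun n n₁ n₂ => h₁.notMem n n₁ (by lia)⟩
      have : F (S x) = (S ^ 1) (F x) := by rw [hSx, hF hk, hadd, add_comm]
      exact ⟨1, ⟨le_rfl, ⟨S x, this⟩, fun n n₁ n₂ => absurd n₁ (by lia)⟩, this⟩
    · have hk : (S ^ r) (b x) ∈ towerBase S V 0 := ⟨h₁.mem, fun n n₁ n₂ => absurd n₁ (by lia)⟩
      have : F (S x) = (S ^ (r' - a x)) (F x) := by
        have := hF hk
        rw [pow_zero, Equiv.Perm.one_apply, Equiv.Perm.one_apply] at this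
        rw [hSx, ← Nat.succ_eq_add_one, heq, this, h₄, hadd, Nat.sub_add_cancel (by lia)]
      refine ⟨r' - a x, ⟨by lia, ⟨S x, this⟩, fun n n₁ n₂ hn => ?_⟩, this⟩
      rw [hadd] at hn
      exact (hmem (hb x).1 h₂ (by lia) hn).2 r h₁.pos (by lia) h₁.mem
  choose k hk hk' using hstep
  let φ : X ≃ₜ Set.range F := Continuous.homeoOfEquivCompactToT2 (f := Equiv.ofInjective F hinj)
    (hcont.subtype_mk _)
  refine ⟨Set.range F, ⟨(isCompact_range hcont).isClosed, hopen⟩, Set.range_nonempty F, ?_, φ,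
    fun y => k (φ.symm y), fun y => ?_, fun x => ?_⟩
  · intro huniv
    let x := Classical.arbitrary X
    obtain ⟨r, r', h₁, h₂, h₃, -⟩ := hret _ (hb x).1
    exact (hmem (hb x).1 h₂ h₃ (huniv ▸ Set.mem_univ _)).2 r h₁.pos le_rfl h₁.mem
  · obtain ⟨x, rfl⟩ := φ.surjective y
    simp only [Homeomorph.symm_apply_apply]
    exact ⟨(hk x).pos, (hk x).mem, (hk x).notMem⟩
  · simp only [Homeomorph.symm_apply_apply]
    exact hk' x

end Tower

end Towers

/-- Two bi-infinite sequences agree on the window `[-L, L)`. -/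
def Close {A : Type*} (x y : ℤ → A) (L : ℕ) : Prop :=
  ∀ t : ℤ, -L ≤ t → t < L → x t = y t

section Close

variable {A : Type*} {x y z : ℤ → A} {L : ℕ}

lemma Close.refl (x : ℤ → A) (L : ℕ) : Close x x L := fun _ _ _ => rfl

lemma Close.symm (h : Close x y L) : Close y x L := fun t h₁ h₂ => (h t h₁ h₂).symm

lemma Close.trans (h : Close x y L) (h' : Close y z L) : Close x z L :=
  fun t h₁ h₂ => (h t h₁ h₂).trans (h' t h₁ h₂)

lemma eq_of_forall_close (h : ∀ L, Close x y L) : x = y :=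
  funext fun t => h (t.natAbs + 1) t (by lia) (by lia)

lemma isClopen_close [TopologicalSpace A] [DiscreteTopology A] {X : Set (ℤ → A)} (x : ℤ → A)
    (L : ℕ) : IsClopen {z : X | Close z x L} := by
  have : {z : X | Close z x L} = ⋂ t ∈ Finset.Ico (-(L : ℤ)) L, {z : X | (z : ℤ → A) t = x t} := by
    ext z
    simp [Close]
  rw [this]
  exact isClopen_biInter_finset fun t _ =>
    (isClopen_discrete {x t}).preimage ((continuous_apply t).comp continuous_subtype_val)

end Close

lemma isOpen_firstReturn {X : Type*} [TopologicalSpace X] {S : Equiv.Perm X} {V : Set X}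
    (hS : Continuous S) (hV : IsClopen V) (k : ℕ) : IsOpen {x | FirstReturn S V x k} := by
  have hpow : ∀ n : ℕ, Continuous (S ^ n) := fun n => by
    rw [Equiv.Perm.coe_pow]
    exact hS.iterate n
  rcases Nat.eq_zero_or_pos k with rfl | hk
  · convert! isOpen_empty
    exact Set.eq_empty_of_forall_notMem fun x hx => absurd hx.pos (by simp)
  · have : {x | FirstReturn S V x k} =
        (S ^ k) ⁻¹' V ∩ ⋂ n ∈ Finset.Ico 1 k, (S ^ n) ⁻¹' Vᶜ := by
      ext x
      simp only [Set.mem_ofPred_eq, Set.mem_inter_iff, Set.mem_preimage, Set.mem_iInter,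
        Finset.mem_Ico, Set.mem_compl_iff, and_imp]
      exact ⟨fun h => ⟨h.mem, h.notMem⟩, fun h => ⟨hk, h.1, h.2⟩⟩
    rw [this]
    exact (hV.isOpen.preimage (hpow k)).inter
      (isOpen_biInter_finset fun n _ => hV.compl.isOpen.preimage (hpow n))

lemma mem_closure_swap {X ι : Type*} [TopologicalSpace X] {x y : ι → X} {z w : X}
    (h : (z, w) ∈ closure (Set.range fun j => (x j, y j))) :
    (w, z) ∈ closure (Set.range fun j => (y j, x j)) :=
  map_mem_closure (f := Prod.swap) (x := (z, w)) continuous_swap h (by rintro _ ⟨j, rfl⟩; exact ⟨j, rfl⟩)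

section Graph

variable {A : Type*} [TopologicalSpace A] [DiscreteTopology A] {X : Set (ℤ → A)} {x y : ℤ → X}

/-- A uniformly continuous correspondence of two sequences extends to the closure of its graph. -/
lemma close_of_mem_closure {L L' : ℕ}
    (H : ∀ j j', Close (x j : ℤ → A) (x j') L' → Close (y j : ℤ → A) (y j') L) {z w z' w' : X}
    (h : (z, w) ∈ closure (Set.range fun j => (x j, y j)))
    (h' : (z', w') ∈ closure (Set.range fun j => (x j, y j))) (hz : Close (z : ℤ → A) z' L') :
    Close (w : ℤ → A) w' L := by
  have near : ∀ z w : X, (z, w) ∈ closure (Set.range fun j => (x j, y j)) →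
      ∃ j, Close (x j : ℤ → A) z L' ∧ Close (y j : ℤ → A) w L := by
    intro z w h
    obtain ⟨-, ⟨h₁, h₂⟩, j, rfl⟩ := mem_closure_iff.1 h _
      ((isClopen_close (X := X) (z : ℤ → A) L').isOpen.prod
        (isClopen_close (X := X) (w : ℤ → A) L).isOpen) ⟨Close.refl _ _, Close.refl _ _⟩
    exact ⟨j, h₁, h₂⟩
  obtain ⟨j, h₁, h₂⟩ := near z w h
  obtain ⟨j', h₁', h₂'⟩ := near z' w' h'
  exact h₂.symm.trans ((H j j' (h₁.trans (hz.trans h₁'.symm))).trans h₂')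

lemma eq_of_mem_closure
    (H : ∀ L, ∃ L', ∀ j j', Close (x j : ℤ → A) (x j') L' → Close (y j : ℤ → A) (y j') L)
    {z w w' : X} (h : (z, w) ∈ closure (Set.range fun j => (x j, y j)))
    (h' : (z, w') ∈ closure (Set.range fun j => (x j, y j))) : w = w' :=
  Subtype.ext (eq_of_forall_close fun L => by
    obtain ⟨L', hL⟩ := H L
    exact close_of_mem_closure hL h h' (Close.refl _ _))

lemma exists_mem_closure [CompactSpace X] {z : X} (h : z ∈ closure (Set.range x)) :
    ∃ w, (z, w) ∈ closure (Set.range fun j => (x j, y j)) := by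
  have hc : IsClosed (Prod.fst '' closure (Set.range fun j => (x j, y j))) :=
    (isClosed_closure.isCompact.image continuous_fst).isClosed
  obtain ⟨⟨_, w⟩, hw, rfl⟩ := closure_minimal (s := Set.range x)
    (by rintro _ ⟨j, rfl⟩; exact ⟨_, subset_closure ⟨j, rfl⟩, rfl⟩) hc h
  exact ⟨w, hw⟩

/-- Self-inducedness from matching dense sequences in the two bases. -/
theorem exists_selfInduced_of_dense [CompactSpace X] [Nonempty X] {S : Equiv.Perm X}
    {V V' : Set X} (hS : Continuous S) (hV : IsClopen V) (hV' : IsClopen V')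
    (hx : ∀ j, x j ∈ V) (hy : ∀ j, y j ∈ V') (hVx : V ⊆ closure (Set.range x))
    (hVy : V' ⊆ closure (Set.range y))
    (H : ∀ L, ∃ L', ∀ j j', Close (x j : ℤ → A) (x j') L' → Close (y j : ℤ → A) (y j') L)
    (H' : ∀ L, ∃ L', ∀ j j', Close (y j : ℤ → A) (y j') L' → Close (x j : ℤ → A) (x j') L)
    (hback : ∀ x, ∃ a : ℕ, ∃ b ∈ V, (S ^ a) b = x)
    (hr : ∀ z, ∃ r, FirstReturn S V z r) (hr' : ∀ z, ∃ r, FirstReturn S V' z r)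
    (hret : ∀ j r r', FirstReturn S V (x j) r → FirstReturn S V' (y j) r' →
      r < r' ∧ ∃ j', (S ^ r) (x j) = x j' ∧ (S ^ r') (y j) = y j') :
    ∃ U : Set X, IsClopen U ∧ U.Nonempty ∧ U ≠ Set.univ ∧
      ∃ (φ : X ≃ₜ ↥U) (r : ↥U → ℕ),
        (∀ y : ↥U, 1 ≤ r y ∧ (S ^ r y) (y : X) ∈ U ∧
          ∀ n : ℕ, 1 ≤ n → n < r y → (S ^ n) (y : X) ∉ U) ∧
        ∀ x : X, ((φ (S x) : ↥U) : X) = (S ^ r (φ x)) ((φ x : ↥U) : X) := by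
  classical
  have hpow : ∀ n : ℕ, Continuous (S ^ n) := fun n => by
    rw [Equiv.Perm.coe_pow]
    exact hS.iterate n
  have hex : ∀ z, ∃ w, z ∈ V → (z, w) ∈ closure (Set.range fun j => (x j, y j)) := fun z => by
    by_cases hz : z ∈ V
    · obtain ⟨w, hw⟩ := exists_mem_closure (y := y) (hVx hz)
      exact ⟨w, fun _ => hw⟩
    · exact ⟨z, fun h => absurd h hz⟩
  choose g hg using hex
  have hmem : ∀ {z w : X}, (z, w) ∈ closure (Set.range fun j => (x j, y j)) → z ∈ V ∧ w ∈ V' :=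
    fun {z w} h => closure_minimal (t := V ×ˢ V') (by rintro _ ⟨j, rfl⟩; exact ⟨hx j, hy j⟩)
      (hV.isClosed.prod hV'.isClosed) h
  have hstep : ∀ {z w : X} {r r' : ℕ}, (z, w) ∈ closure (Set.range fun j => (x j, y j)) →
      FirstReturn S V z r → FirstReturn S V' w r' → r < r' ∧
      ((S ^ r) z, (S ^ r') w) ∈ closure (Set.range fun j => (x j, y j)) := by
    intro z w r r' h h₁ h₂
    have hO := (isOpen_firstReturn hS hV r).prod (isOpen_firstReturn hS hV' r')
    constructor
    · obtain ⟨-, ⟨k₁, k₂⟩, j, rfl⟩ := mem_closure_iff.1 h _ hO ⟨h₁, h₂⟩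
      exact (hret j r r' k₁ k₂).1
    · refine map_mem_closure (f := Prod.map (S ^ r) (S ^ r')) (x := (z, w))
        ((hpow r).prodMap (hpow r')) (hO.inter_closure ⟨⟨h₁, h₂⟩, h⟩) ?_
      rintro _ ⟨⟨k₁, k₂⟩, j, rfl⟩
      obtain ⟨-, j', e₁, e₂⟩ := hret j r r' k₁ k₂
      exact ⟨j', Prod.ext e₁.symm e₂.symm⟩
  refine exists_selfInduced (g := g) hS hV hV' ?_ ⟨fun z hz => (hmem (hg z hz)).2, ?_, ?_⟩ hback ?_
  · rw [Topology.IsInducing.subtypeVal.continuousOn_iff]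
    refine continuousOn_pi.2 fun t z hz => ?_
    obtain ⟨L', hL⟩ := H (t.natAbs + 1)
    refine ContinuousWithinAt.congr_of_eventuallyEq (f := fun _ => (g z : ℤ → A) t)
      continuousWithinAt_const ?_ rfl
    filter_upwards [mem_nhdsWithin_of_mem_nhds ((isClopen_close (X := X) (z : ℤ → A)
      L').isOpen.mem_nhds (Close.refl _ _)), self_mem_nhdsWithin] with z' h₁ h₂
    exact close_of_mem_closure hL (hg z' h₂) (hg z hz) h₁ t (by lia) (by lia)
  · intro z hz z' hz' heq
    have h₁ := mem_closure_swap (hg z hz)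
    rw [heq] at h₁
    exact eq_of_mem_closure H' h₁ (mem_closure_swap (hg z' hz'))
  · intro w hw
    obtain ⟨z, hz⟩ := exists_mem_closure (y := x) (hVy hw)
    have hz' := mem_closure_swap hz
    have hzV := (hmem hz').1
    exact ⟨z, hzV, eq_of_mem_closure H (hg z hzV) hz'⟩
  · intro b hb
    obtain ⟨r, h₁⟩ := hr b
    obtain ⟨r', h₂⟩ := hr' (g b)
    obtain ⟨h₃, h₄⟩ := hstep (hg b hb) h₁ h₂
    exact ⟨r, r', h₁, h₂, h₃, eq_of_mem_closure H (hg _ h₁.mem) h₄⟩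

end Graph

section Compact

variable {A : Type*} [TopologicalSpace A] {X : Set (ℤ → A)}

/-- Windows form a neighbourhood basis. -/
lemma exists_close_subset {O : Set X} (hO : IsOpen O) {x : X} (hx : x ∈ O) :
    ∃ L : ℕ, ∀ y : X, Close (y : ℤ → A) x L → y ∈ O := by
  obtain ⟨O', hO', rfl⟩ := isOpen_induced_iff.1 hO
  obtain ⟨I, u, hu, hsub⟩ := isOpen_pi_iff.1 hO' x hx
  refine ⟨I.sup Int.natAbs + 1, fun y hy => hsub fun t ht => ?_⟩
  have : t.natAbs ≤ I.sup Int.natAbs := Finset.le_sup ht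
  rw [hy t (by lia) (by lia)]
  exact (hu t ht).2

/-- Locally constant functions on a compact sequence space depend on a fixed window. -/
lemma exists_close_imp_eq [DiscreteTopology A] [CompactSpace X] {β : Type*} {g : X → β} (hg : IsLocallyConstant g) :
    ∃ K : ℕ, ∀ x y : X, Close (x : ℤ → A) y K → g x = g y := by
  have hex : ∀ x : X, ∃ L : ℕ, ∀ y : X, Close (y : ℤ → A) x L → g y = g x := fun x =>
    exists_close_subset (hg.isOpen_fiber (g x)) rfl
  choose L hL using hex
  obtain ⟨I, hI⟩ := isCompact_univ.elim_finite_subcover (fun x : X => {z : X | Close (z : ℤ → A) x (L x)})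
    (fun x => (isClopen_close _ _).isOpen)
    (fun x _ => Set.mem_iUnion.2 ⟨x, Close.refl _ _⟩)
  refine ⟨I.sup L, fun x y hxy => ?_⟩
  obtain ⟨z, hz, hxz⟩ := Set.mem_iUnion₂.1 (hI (Set.mem_univ x))
  have hle : L z ≤ I.sup L := Finset.le_sup hz
  have hyx : Close (y : ℤ → A) x (L z) := fun t h₁ h₂ => (hxy t (by lia) (by lia)).symm
  rw [hL z x hxz, hL z y (hyx.trans hxz)]

end Compact

section Minimal

variable {X : Type*} [TopologicalSpace X] [CompactSpace X] {S : Equiv.Perm X} {V : Set X}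

lemma exists_zpow_mem (hS : Continuous S) (hS' : Continuous S.symm)
    (hmin : ∀ x, Dense (Set.range fun n : ℤ => (S ^ n) x)) (hV : IsOpen V) (hne : V.Nonempty) :
    ∃ I : ℕ, ∀ x, ∃ k : ℤ, -I ≤ k ∧ k ≤ I ∧ (S ^ k) x ∈ V := by
  have hz : ∀ k : ℤ, Continuous (S ^ k) := by
    rintro (k | k)
    · rw [Int.ofNat_eq_natCast, zpow_natCast, Equiv.Perm.coe_pow]
      exact hS.iterate k
    · rw [zpow_negSucc, ← inv_pow, Equiv.Perm.coe_pow]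
      exact hS'.iterate _
  obtain ⟨I, hI⟩ := isCompact_univ.elim_finite_subcover (fun k : ℤ => (S ^ k) ⁻¹' V)
    (fun k => hV.preimage (hz k)) (fun x _ => by
      obtain ⟨-, ⟨k, rfl⟩, hk⟩ := (hmin x).exists_mem_open hV hne
      exact Set.mem_iUnion.2 ⟨k, hk⟩)
  refine ⟨I.sup Int.natAbs, fun x => ?_⟩
  obtain ⟨k, hk, hxk⟩ := Set.mem_iUnion₂.1 (hI (Set.mem_univ x))
  have hle : k.natAbs ≤ I.sup Int.natAbs := Finset.le_sup hk
  exact ⟨k, by lia, by lia, hxk⟩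

lemma exists_pow_mem (hS : Continuous S) (hS' : Continuous S.symm)
    (hmin : ∀ x, Dense (Set.range fun n : ℤ => (S ^ n) x)) (hV : IsOpen V) (hne : V.Nonempty) :
    ∃ I : ℕ, ∀ x, ∃ k : ℕ, 1 ≤ k ∧ k ≤ I ∧ (S ^ k) x ∈ V := by
  obtain ⟨I, hI⟩ := exists_zpow_mem hS hS' hmin hV hne
  refine ⟨2 * I + 1, fun x => ?_⟩
  obtain ⟨k, h₁, h₂, h₃⟩ := hI ((S ^ (I + 1)) x)
  obtain ⟨l, hl⟩ := Int.le.dest h₁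
  refine ⟨l + 1, by lia, by lia, ?_⟩
  rw [← zpow_natCast, ← Equiv.Perm.mul_apply, ← zpow_add] at h₃
  rw [← zpow_natCast]
  convert h₃ using 3
  push_cast
  lia

lemma exists_pow_eq (hS : Continuous S) (hS' : Continuous S.symm)
    (hmin : ∀ x, Dense (Set.range fun n : ℤ => (S ^ n) x)) (hV : IsOpen V) (hne : V.Nonempty)
    (x : X) : ∃ a : ℕ, ∃ b ∈ V, (S ^ a) b = x := by
  obtain ⟨I, hI⟩ := exists_zpow_mem hS hS' hmin hV hne
  obtain ⟨k, h₁, h₂, h₃⟩ := hI ((S ^ (-I : ℤ)) x)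
  obtain ⟨a, ha⟩ := Int.le.dest h₂
  refine ⟨a, _, h₃, ?_⟩
  rw [← zpow_natCast, ← Equiv.Perm.mul_apply, ← Equiv.Perm.mul_apply, ← zpow_add, ← zpow_add]
  rw [show (a : ℤ) + k + -I = 0 by lia, zpow_zero, Equiv.Perm.one_apply]

lemma exists_firstReturn (hS : Continuous S) (hS' : Continuous S.symm)
    (hmin : ∀ x, Dense (Set.range fun n : ℤ => (S ^ n) x)) (hV : IsOpen V) (hne : V.Nonempty)
    (x : X) : ∃ r, FirstReturn S V x r := by
  classical
  obtain ⟨I, hI⟩ := exists_pow_mem hS hS' hmin hV hne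
  have hex : ∃ k : ℕ, 1 ≤ k ∧ (S ^ k) x ∈ V := by
    obtain ⟨k, h₁, -, h₃⟩ := hI x
    exact ⟨k, h₁, h₃⟩
  exact ⟨Nat.find hex, (Nat.find_spec hex).1, (Nat.find_spec hex).2,
    fun n h₁ h₂ h₃ => Nat.find_min hex h₂ ⟨h₁, h₃⟩⟩

end Minimal

section Shift

variable {A : Type*} {X : Set (ℤ → A)} {T : Equiv.Perm X}

lemma zpow_shift_apply (hT : ∀ x : X, ∀ k, (T x : ℤ → A) k = (x : ℤ → A) (k + 1)) (i : ℤ) (x : X)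
    (k : ℤ) : ((T ^ i) x : ℤ → A) k = (x : ℤ → A) (k + i) := by
  induction i generalizing k with
  | zero => simp
  | succ i ih =>
    rw [add_comm (i : ℤ), zpow_add, Equiv.Perm.mul_apply, zpow_one, hT, ih, add_assoc]
  | pred i ih =>
    have h := hT ((T ^ (-(i : ℤ) - 1)) x) (k - 1)
    rw [← Equiv.Perm.mul_apply, ← zpow_one_add, show (1 : ℤ) + (-i - 1) = -i by ring, ih,
      sub_add_cancel] at h
    rw [← h]
    exact congrArg (x : ℤ → A) (by ring)

lemma close_zpow_iff (hT : ∀ x : X, ∀ k, (T x : ℤ → A) k = (x : ℤ → A) (k + 1)) {x : X}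
    {i i' : ℤ} {L : ℕ} :
    Close ((T ^ i) x : ℤ → A) ((T ^ i') x) L ↔ Agree (x : ℤ → A) i i' (-L) L := by
  simp only [Close, Agree, zpow_shift_apply hT, add_comm]

lemma close_zpow_self_iff (hT : ∀ x : X, ∀ k, (T x : ℤ → A) k = (x : ℤ → A) (k + 1)) {x : X}
    {i : ℤ} {L : ℕ} : Close ((T ^ i) x : ℤ → A) x L ↔ Agree (x : ℤ → A) i 0 (-L) L := by
  simpa using close_zpow_iff hT (x := x) (i := i) (i' := 0) (L := L)

end Shift

section Orbit

variable {X : Type*} {T S : Equiv.Perm X} {p : X → ℕ}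

lemma pow_zpow_apply (hSp : ∀ x, S x = (T ^ p x) x) (x : X) (c : ℕ) (i : ℤ) :
    (S ^ c) ((T ^ i) x) = (T ^ ((fun i : ℤ => i + p ((T ^ i) x))^[c] i)) x := by
  induction c generalizing i with
  | zero => simp
  | succ c ih =>
    rw [pow_succ, Equiv.Perm.mul_apply, hSp, Function.iterate_succ_apply, ← ih, add_comm i,
      zpow_add, Equiv.Perm.mul_apply, zpow_natCast]

lemma exists_pow_le (hSp : ∀ x, S x = (T ^ p x) x) {M : ℕ} (hM : ∀ x, p x ≤ M) (x : X) (c : ℕ) :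
    ∃ k : ℕ, k ≤ M * c ∧ (S ^ c) x = (T ^ k) x := by
  induction c with
  | zero => exact ⟨0, by simp⟩
  | succ c ih =>
    obtain ⟨k, hk, h⟩ := ih
    refine ⟨p ((T ^ k) x) + k, ?_, ?_⟩
    · have := hM ((T ^ k) x)
      rw [mul_add_one]
      lia
    · rw [pow_succ', Equiv.Perm.mul_apply, h, hSp, pow_add, Equiv.Perm.mul_apply]

lemma dense_zpow [TopologicalSpace X] (hSp : ∀ x, S x = (T ^ p x) x) {M : ℕ} (hM : ∀ x, p x ≤ M)
    {x : X} (hmin : Dense (Set.range fun n : ℤ => (S ^ n) x)) :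
    Dense (Set.range fun n : ℤ => (T ^ n) x) := by
  refine hmin.mono ?_
  rintro _ ⟨n | n, rfl⟩
  · obtain ⟨k, -, h⟩ := exists_pow_le hSp hM x n
    exact ⟨k, by simpa using h.symm⟩
  · obtain ⟨k, -, h⟩ := exists_pow_le hSp hM ((S ^ (Int.negSucc n)) x) (n + 1)
    refine ⟨-k, ?_⟩
    rw [zpow_negSucc, ← Equiv.Perm.mul_apply, mul_inv_cancel, Equiv.Perm.one_apply] at h
    simp only [zpow_neg, zpow_natCast, zpow_negSucc]
    rw [Equiv.Perm.inv_eq_iff_eq]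
    exact h

end Orbit

/-- A bounded speedup with no periodic points has a locally constant exponent. -/
lemma isLocallyConstant_of_speedup {X : Type*} [TopologicalSpace X] [T2Space X]
    {T S : Equiv.Perm X} {p : X → ℕ} (hTc : Continuous T) (hSc : Continuous S)
    (haper : ∀ x, ∀ n : ℕ, 0 < n → (T ^ n) x ≠ x) (hSp : ∀ x, S x = (T ^ p x) x) {M : ℕ}
    (hM : ∀ x, p x ≤ M) : IsLocallyConstant p := by
  have hinj : ∀ x, ∀ a b : ℕ, a < b → (T ^ a) x ≠ (T ^ b) x := by
    intro x a b hab h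
    exact haper x (b - a) (by lia) (pow_apply_eq_sub hab.le h.symm)
  have hiff : ∀ x c, p x = c ↔ S x = (T ^ c) x := by
    intro x c
    refine ⟨fun h => h ▸ hSp x, fun h => ?_⟩
    rw [hSp] at h
    rcases lt_trichotomy (p x) c with hlt | heq | hlt
    · exact absurd h (hinj x _ _ hlt)
    · exact heq
    · exact absurd h.symm (hinj x _ _ hlt)
  have hcl : ∀ c, IsClosed {x | p x = c} := by
    intro c
    simp only [hiff]
    refine isClosed_eq hSc ?_
    rw [Equiv.Perm.coe_pow]
    exact hTc.iterate c
  rw [IsLocallyConstant.iff_isOpen_fiber]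
  intro c
  have : (p ⁻¹' {c})ᶜ = ⋃ c' ∈ (Finset.range (M + 1)).erase c, {x | p x = c'} := by
    ext x
    simp [hM x]
  rw [← isClosed_compl_iff, this]
  exact isClosed_biUnion_finset fun c' _ => hcl c'

section Main

variable {A : Type*} [TopologicalSpace A] [DiscreteTopology A] {X : Set (ℤ → A)} [CompactSpace X]
  {T S : Equiv.Perm X} {p : X → ℕ} {M : ℕ} {ω : X}

/-- Two-letter words of `ω` occur with bounded gaps. -/
lemma exists_twoWord_bound [Finite A]
    (hT : ∀ x : X, ∀ k, (T x : ℤ → A) k = (x : ℤ → A) (k + 1)) (hM : ∀ x, p x ≤ M)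
    (hSc : Continuous S) (hSc' : Continuous S.symm) (hSp : ∀ x, S x = (T ^ p x) x)
    (hSmin : ∀ x : X, Dense (Set.range fun n : ℤ => (S ^ n) x)) :
    ∃ D : ℕ, ∀ i i₀ : ℤ, ∃ i', i₀ ≤ i' ∧ i' < i₀ + D ∧ Agree (ω : ℤ → A) i i' 0 2 := by
  classical
  have hex : ∀ w : A × A, ∃ D : ℕ, ∀ i i₀ : ℤ, ((ω : ℤ → A) i, (ω : ℤ → A) (i + 1)) = w →
      ∃ i', i₀ ≤ i' ∧ i' < i₀ + D ∧ ((ω : ℤ → A) i', (ω : ℤ → A) (i' + 1)) = w := by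
    intro w
    by_cases hw : ∃ i : ℤ, ((ω : ℤ → A) i, (ω : ℤ → A) (i + 1)) = w
    · have hO : IsOpen {z : X | ((z : ℤ → A) 0, (z : ℤ → A) 1) = w} := by
        refine (isOpen_discrete ({w} : Set (A × A))).preimage (f := fun z : X =>
          ((z : ℤ → A) 0, (z : ℤ → A) 1)) ?_
        exact ((continuous_apply 0).comp continuous_subtype_val).prodMk
          ((continuous_apply 1).comp continuous_subtype_val)
      obtain ⟨i, hi⟩ := hw
      obtain ⟨I, hI⟩ := exists_pow_mem hSc hSc' hSmin hO
        ⟨(T ^ i) ω, by simpa [zpow_shift_apply hT, add_comm] using hi⟩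
      refine ⟨M * I + 1, fun _ i₀ _ => ?_⟩
      obtain ⟨c, h₁, h₂, h₃⟩ := hI ((T ^ i₀) ω)
      obtain ⟨k, hk, h⟩ := exists_pow_le hSp hM ((T ^ i₀) ω) c
      rw [h, ← zpow_natCast, ← Equiv.Perm.mul_apply, ← zpow_add] at h₃
      have hle : M * c ≤ M * I := Nat.mul_le_mul_left M h₂
      refine ⟨k + i₀, by lia, by push_cast; lia, ?_⟩
      simpa [zpow_shift_apply hT, add_comm] using h₃
    · exact ⟨0, fun i _ hi => absurd ⟨i, hi⟩ hw⟩
  choose D hD using hex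
  have := Fintype.ofFinite A
  refine ⟨Finset.univ.sup D, fun i i₀ => ?_⟩
  obtain ⟨i', h₁, h₂, h₃⟩ := hD _ i i₀ rfl
  have hle : D ((ω : ℤ → A) i, (ω : ℤ → A) (i + 1)) ≤ Finset.univ.sup D :=
    Finset.le_sup (Finset.mem_univ _)
  refine ⟨i', h₁, by lia, fun t h₄ h₅ => ?_⟩
  simp only [Prod.mk.injEq] at h₃
  obtain rfl | rfl : t = 0 ∨ t = 1 := by lia
  · simpa using h₃.1.symm
  · exact h₃.2.symm

theorem selfInduced_of_inflation [Finite A] {f : ℤ → ℤ}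
    (hT : ∀ x : X, ∀ k, (T x : ℤ → A) k = (x : ℤ → A) (k + 1))
    (haper : ∀ x : X, ∀ n : ℕ, 0 < n → (T ^ n) x ≠ x) (hp1 : ∀ x, 1 ≤ p x) (hM : ∀ x, p x ≤ M)
    (hSc : Continuous S) (hSc' : Continuous S.symm) (hSp : ∀ x, S x = (T ^ p x) x)
    (hSmin : ∀ x : X, Dense (Set.range fun n : ℤ => (S ^ n) x))
    (hf : Inflation (ω : ℤ → A) f) (h2 : ∀ j, 2 ≤ f (j + 1) - f j) :
    ∃ U : Set X, IsClopen U ∧ U.Nonempty ∧ U ≠ Set.univ ∧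
      ∃ (φ : X ≃ₜ ↥U) (r : ↥U → ℕ),
        (∀ y : ↥U, 1 ≤ r y ∧ (S ^ r y) (y : X) ∈ U ∧
          ∀ n : ℕ, 1 ≤ n → n < r y → (S ^ n) (y : X) ∉ U) ∧
        ∀ x : X, ((φ (S x) : ↥U) : X) = (S ^ r (φ x)) ((φ x : ↥U) : X) := by
  have hTc : Continuous T := by
    refine Topology.IsInducing.subtypeVal.continuous_iff.2 (continuous_pi fun k => ?_)
    simp only [Function.comp_apply, hT]
    exact (continuous_apply (k + 1)).comp continuous_subtype_val
  obtain ⟨K, hK⟩ := exists_close_imp_eq (isLocallyConstant_of_speedup hTc hSc haper hSp hM)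
  obtain ⟨D, hD⟩ := exists_twoWord_bound (ω := ω) hT hM hSc hSc' hSp hSmin
  let s : ℤ → ℤ := fun i => i + p ((T ^ i) ω)
  have hs : ∀ i, i < s i := fun i => by have := hp1 ((T ^ i) ω); simp only [s]; lia
  have hsM : ∀ i, s i ≤ i + M := fun i => by have := hM ((T ^ i) ω); simp only [s]; lia
  have hloc : ∀ i i', Agree (ω : ℤ → A) i i' (-K) K → s i - i = s i' - i' := fun i i' h => by
    simp only [s, hK _ _ ((close_zpow_iff hT).2 h), add_sub_cancel_left]
  have hper : ∀ q : ℕ, 0 < q → ∃ t, (ω : ℤ → A) (t + q) ≠ (ω : ℤ → A) t := by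
    intro q hq
    by_contra! hc
    refine haper ω q hq (Subtype.ext (funext fun t => ?_))
    rw [← zpow_natCast, zpow_shift_apply hT, hc]
  obtain ⟨n, m, G, G', e, e', he, he', hsame, horb, hG, hG', hlong⟩ :=
    exists_equivalent_returns hf h2 hD hper hs hsM hloc
  have hdense := dense_zpow hSp hM (hSmin ω)
  have hbase : ∀ {n : ℕ} {e : ℤ → ℤ}, Enum (ω : ℤ → A) n e → ∀ i,
      Close ((T ^ i) ω : ℤ → A) ω n ↔ ∃ j, e j = i := fun he i => by
    rw [close_zpow_self_iff hT, he.mem_iff]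
  have hcl : ∀ {n : ℕ} {e : ℤ → ℤ}, Enum (ω : ℤ → A) n e →
      {z : X | Close (z : ℤ → A) ω n} ⊆ closure (Set.range fun j => (T ^ e j) ω) := by
    intro n e he z hz
    refine closure_mono ?_ ((isClopen_close (ω : ℤ → A) n).isOpen.inter_closure
      ⟨hz, hdense.closure_eq ▸ Set.mem_univ z⟩)
    rintro _ ⟨hi, i, rfl⟩
    obtain ⟨j, rfl⟩ := (hbase he i).1 hi
    exact ⟨j, rfl⟩
  have hreturn : ∀ {n : ℕ} {e : ℤ → ℤ}, Enum (ω : ℤ → A) n e → ∀ {j : ℤ} {r : ℕ},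
      FirstReturn S {z : X | Close (z : ℤ → A) ω n} ((T ^ e j) ω) r →
      ∃ j', j < j' ∧ s^[r] (e j) = e j' ∧
        ∀ j'', j < j'' → ∀ k : ℕ, s^[k] (e j) = e j'' → j' ≤ j'' := by
    intro n e he j r hr
    have h₁ := hr.mem
    rw [pow_zpow_apply hSp] at h₁
    obtain ⟨j', hj'⟩ := (hbase he _).1 h₁
    have h₂ := le_iterate hs r (e j)
    have h₃ := hr.pos
    refine ⟨j', he.strictMono.lt_iff_lt.1 (by rw [hj']; exact lt_of_lt_of_le (by lia) h₂), hj'.symm,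
      fun j'' h₄ k h₅ => ?_⟩
    by_contra! h₆
    have h₇ : k < r := (iterate_lt_iterate hs (e j)).lt_iff_lt.1 (by
      rw [h₅]
      exact (he.strictMono h₆).trans_eq hj')
    refine hr.notMem k (Nat.pos_of_ne_zero ?_) h₇ ?_
    · rintro rfl
      exact h₄.ne (he.strictMono.injective h₅)
    · rw [pow_zpow_apply hSp]
      exact (hbase he _).2 ⟨j'', h₅.symm⟩
  have : Nonempty X := ⟨ω⟩
  refine exists_selfInduced_of_dense (V := {z : X | Close (z : ℤ → A) ω n})
    (V' := {z : X | Close (z : ℤ → A) ω m}) (x := fun j => (T ^ e j) ω)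
    (y := fun j => (T ^ e' j) ω) hSc (isClopen_close _ _) (isClopen_close _ _)
    (fun j => (hbase he _).2 ⟨j, rfl⟩) (fun j => (hbase he' _).2 ⟨j, rfl⟩) (hcl he) (hcl he')
    ?_ ?_ (exists_pow_eq hSc hSc' hSmin (isClopen_close _ _).isOpen ⟨ω, Close.refl _ _⟩)
    (exists_firstReturn hSc hSc' hSmin (isClopen_close _ _).isOpen ⟨ω, Close.refl _ _⟩)
    (exists_firstReturn hSc hSc' hSmin (isClopen_close _ _).isOpen ⟨ω, Close.refl _ _⟩) ?_
  · simp only [close_zpow_iff hT]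
    exact he.exists_agree_imp he' hG fun j j' => (hsame j j').1
  · simp only [close_zpow_iff hT]
    exact he'.exists_agree_imp he hG' fun j j' => (hsame j j').2
  · intro j r r' hr hr'
    obtain ⟨j₁, h₁, h₂, h₃⟩ := hreturn he hr
    obtain ⟨j₂, k₁, k₂, k₃⟩ := hreturn he' hr'
    obtain ⟨a, ha⟩ := (horb j j₁ h₁.le).1 ⟨r, h₂⟩
    obtain ⟨b, hb⟩ := (horb j j₂ k₁.le).2 ⟨r', k₂⟩
    obtain rfl : j₁ = j₂ := le_antisymm (h₃ _ k₁ b hb) (k₃ _ h₁ a ha)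
    refine ⟨?_, j₁, ?_, ?_⟩
    · have g₁ := sub_le_mul_of_gap_of_le hG h₁.le
      have g₂ := mul_le_sub_of_gap_of_le (f := e') (c := M * G + 1)
        (fun j => by have := hlong j; lia) h₁.le
      have g₃ := le_iterate hs r (e j)
      have g₄ := iterate_le hsM r' (e' j)
      rw [h₂] at g₃
      rw [k₂] at g₄
      have g₅ : (M : ℤ) * r ≤ M * ((j₁ - j) * G) := mul_le_mul_of_nonneg_left (by lia) (by lia)
      have g₆ : (M : ℤ) * r < M * r' := by linarith
      exact_mod_cast lt_of_mul_lt_mul_left g₆ (by lia)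
    · rw [pow_zpow_apply hSp]
      exact congrArg (fun i => (T ^ i) ω) h₂
    · rw [pow_zpow_apply hSp]
      exact congrArg (fun i => (T ^ i) ω) k₂

end Main

section Words

variable {A : Type*} {θ Θ : A → List A}

lemma substIter_zero (θ : A → List A) (a : A) : substIter θ 0 a = [a] := rfl

lemma iterate_flatMap (θ : A → List A) (k : ℕ) (w : List A) :
    (fun w : List A => w.flatMap θ)^[k] w = w.flatMap (substIter θ k) := by
  induction k generalizing w with
  | zero => exact (List.flatMap_singleton' w).symm
  | succ k ih =>
    have : substIter θ (k + 1) = fun a => (θ a).flatMap (substIter θ k) := by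
      funext a
      rw [substIter, Function.iterate_succ_apply, ih, List.flatMap_singleton]
    rw [Function.iterate_succ_apply, ih, List.flatMap_assoc, this]

lemma substIter_add (θ : A → List A) (j k : ℕ) (a : A) :
    substIter θ (j + k) a = (substIter θ k a).flatMap (substIter θ j) := by
  rw [substIter, Function.iterate_add_apply, iterate_flatMap, substIter]

lemma substIter_succ (θ : A → List A) (k : ℕ) (a : A) :
    substIter θ (k + 1) a = (substIter θ k a).flatMap θ := by
  rw [substIter, Function.iterate_succ_apply', substIter]

lemma substIter_substIter (θ : A → List A) (k m : ℕ) (a : A) :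
    substIter (substIter θ k) m a = substIter θ (k * m) a := by
  induction m with
  | zero => rfl
  | succ m ih => rw [substIter_succ, ih, ← substIter_add, mul_add_one, add_comm]

lemma reverse_substIter (θ : A → List A) (m : ℕ) (a : A) :
    (substIter (fun a => (θ a).reverse) m a).reverse = substIter θ m a := by
  induction m with
  | zero => rfl
  | succ m ih =>
    rw [substIter_succ, substIter_succ, List.reverse_flatMap, ih]
    congr 1
    funext a
    simp

lemma two_mul_length_le_flatMap (h2 : ∀ a, 2 ≤ (Θ a).length) (w : List A) :
    2 * w.length ≤ (w.flatMap Θ).length := by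
  induction w with
  | nil => simp
  | cons a w ih =>
    have := h2 a
    simp only [List.length_cons, List.flatMap_cons, List.length_append]
    lia

lemma lt_length_substIter (h2 : ∀ a, 2 ≤ (Θ a).length) (m : ℕ) (a : A) :
    m < (substIter Θ m a).length := by
  induction m with
  | zero => simp [substIter_zero]
  | succ m ih =>
    have := two_mul_length_le_flatMap h2 (substIter Θ m a)
    rw [substIter_succ]
    lia

/-- A growing substitution whose value at `l` begins with `l` has a one-sided fixed point. -/
lemma exists_fixed_sequence {l : A} (hl : (Θ l).head? = some l) (h2 : ∀ a, 2 ≤ (Θ a).length) :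
    ∃ u : ℕ → A, (∀ m n, n < (substIter Θ m l).length → (substIter Θ m l)[n]? = some (u n)) ∧
      ∀ n t, t < (Θ (u n)).length →
        (Θ (u n))[t]? = some (u (∑ i ∈ Finset.range n, (Θ (u i)).length + t)) := by
  obtain ⟨w, hw⟩ := List.head?_eq_some_iff.1 hl
  have hpre : ∀ m k, substIter Θ m l <+: substIter Θ (m + k) l := by
    intro m k
    induction k with
    | zero => exact List.prefix_rfl
    | succ k ih =>
      refine ih.trans ⟨w.flatMap (substIter Θ (m + k)), ?_⟩
      rw [← add_assoc, substIter_add Θ (m + k) 1, substIter_succ, substIter_zero,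
        List.flatMap_singleton, hw, List.flatMap_cons]
  have hget : ∀ m k n, n < (substIter Θ m l).length →
      (substIter Θ (m + k) l)[n]? = (substIter Θ m l)[n]? := by
    intro m k n hn
    obtain ⟨v, hv⟩ := hpre m k
    rw [← hv, List.getElem?_append_left hn]
  let u : ℕ → A := fun n => (substIter Θ n l)[n]'(lt_length_substIter h2 n l)
  have hu : ∀ m n, n < (substIter Θ m l).length → (substIter Θ m l)[n]? = some (u n) := by
    intro m n hn
    rw [← hget m n n hn, add_comm, hget n m n (lt_length_substIter h2 n l),
      List.getElem?_eq_getElem (lt_length_substIter h2 n l)]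
  refine ⟨u, hu, fun n t ht => ?_⟩
  have hlen : ∀ k, k ≤ n + 1 → (((substIter Θ (n + 1) l).take k).flatMap Θ).length =
      ∑ i ∈ Finset.range k, (Θ (u i)).length := by
    intro k hk
    induction k with
    | zero => simp
    | succ k ih =>
      have hlt : k < (substIter Θ (n + 1) l).length :=
        lt_of_lt_of_le (by lia) (lt_length_substIter h2 (n + 1) l).le
      have hk' := hu (n + 1) k hlt
      rw [List.getElem?_eq_getElem hlt, Option.some_inj] at hk'
      rw [← List.take_append_getElem hlt, List.flatMap_append, List.length_append, ih (by lia),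
        List.flatMap_singleton, hk', Finset.sum_range_succ]
  have hlt : n < (substIter Θ (n + 1) l).length :=
    lt_of_lt_of_le (by lia) (lt_length_substIter h2 (n + 1) l).le
  have hn := hu (n + 1) n hlt
  rw [List.getElem?_eq_getElem hlt, Option.some_inj] at hn
  have hsplit : substIter Θ (n + 1 + 1) l = ((substIter Θ (n + 1) l).take n).flatMap Θ ++
      (Θ (u n) ++ ((substIter Θ (n + 1) l).drop (n + 1)).flatMap Θ) := by
    conv_lhs => rw [substIter_succ, ← List.take_append_drop n (substIter Θ (n + 1) l),
      List.drop_eq_getElem_cons hlt, List.flatMap_append, List.flatMap_cons, hn]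
  have hl' := hlen n (by lia)
  rw [← hu (n + 1 + 1) _ (by rw [hsplit, List.length_append, List.length_append, hl']; lia), hsplit,
    List.getElem?_append_right (by lia), hl', Nat.add_sub_cancel_left,
    List.getElem?_append_left ht]

end Words

section TwoSided

variable {A : Type*} {θ Θ : A → List A} {l r : A}

/-- A growing substitution with `Θ l = l ⋯` and `Θ r = ⋯ r` has a two-sided fixed point. -/
lemma exists_fixed_biinfinite (hl : (Θ l).head? = some l) (hr : (Θ r).getLast? = some r)
    (h2 : ∀ a, 2 ≤ (Θ a).length) :
    ∃ (ω : ℤ → A) (f : ℤ → ℤ), f 0 = 0 ∧ (∀ j, f (j + 1) - f j = (Θ (ω j)).length) ∧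
      (∀ j, ∀ t : ℕ, t < (Θ (ω j)).length → (Θ (ω j))[t]? = some (ω (f j + t))) ∧
      ∀ m, ∀ t : ℕ, t < (substIter Θ m r ++ substIter Θ m l).length →
        (substIter Θ m r ++ substIter Θ m l)[t]? = some (ω (t - (substIter Θ m r).length)) := by
  obtain ⟨u, hu₁, hu₂⟩ := exists_fixed_sequence hl h2
  obtain ⟨v, hv₁, hv₂⟩ := exists_fixed_sequence (Θ := fun a => (Θ a).reverse) (l := r)
    (by simpa using hr) (by simpa using h2)
  simp only [List.length_reverse] at hv₂
  let ω : ℤ → A := fun j => if 0 ≤ j then u j.toNat else v (-j - 1).toNat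
  let f : ℤ → ℤ := fun j => if 0 ≤ j then ∑ i ∈ Finset.range j.toNat, ((Θ (u i)).length : ℤ)
    else -∑ i ∈ Finset.range (-j).toNat, ((Θ (v i)).length : ℤ)
  have ωu : ∀ n : ℕ, ω n = u n := fun n => by simp [ω]
  have ωv : ∀ n : ℕ, ω (-n - 1) = v n := fun n => by
    have : ¬ (0 : ℤ) ≤ -n - 1 := by lia
    simp only [ω, if_neg this]
    congr 1
    lia
  have fu : ∀ n : ℕ, f n = ∑ i ∈ Finset.range n, ((Θ (u i)).length : ℤ) := fun n => by simp [f]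
  have fv : ∀ n : ℕ, f (-n) = -∑ i ∈ Finset.range n, ((Θ (v i)).length : ℤ) := fun n => by
    rcases Nat.eq_zero_or_pos n with rfl | hn
    · simp [f]
    · simp [f, hn.ne']
  have hcase : ∀ j : ℤ, (∃ n : ℕ, j = n) ∨ ∃ n : ℕ, j = -n - 1 := by
    intro j
    rcases le_or_gt 0 j with h | h
    · exact Or.inl ⟨j.toNat, by lia⟩
    · exact Or.inr ⟨(-j - 1).toNat, by lia⟩
  have fv' : ∀ n : ℕ, f (-n - 1) = f (-n) - (Θ (v n)).length := fun n => by
    have := fv (n + 1)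
    rw [Finset.sum_range_succ] at this
    push_cast at this
    rw [show -(n : ℤ) - 1 = -(n + 1) by ring, this, fv]
    ring
  refine ⟨ω, f, by simp [f], fun j => ?_, fun j t ht => ?_, fun m t ht => ?_⟩
  · obtain ⟨n, rfl⟩ | ⟨n, rfl⟩ := hcase j
    · have := fu (n + 1)
      push_cast at this
      rw [this, fu, ωu, Finset.sum_range_succ, add_sub_cancel_left]
    · rw [fv', sub_add_cancel, ωv]
      ring
  · obtain ⟨n, rfl⟩ | ⟨n, rfl⟩ := hcase j
    · rw [ωu] at ht ⊢
      rw [hu₂ n t ht, fu, ← ωu]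
      push_cast
      rfl
    · rw [ωv] at ht ⊢
      have := hv₂ n ((Θ (v n)).length - 1 - t) (by lia)
      rw [List.getElem?_reverse (by lia),
        show (Θ (v n)).length - 1 - ((Θ (v n)).length - 1 - t) = t by lia] at this
      rw [this, fv', fv, ← ωv]
      push_cast [Nat.sub_sub, Nat.cast_sub (show 1 + t ≤ (Θ (v n)).length by lia)]
      congr 2
      ring
  · have hrev := reverse_substIter Θ m r
    have hlen := congrArg List.length hrev
    rw [List.length_reverse] at hlen
    rcases lt_or_ge t (substIter Θ m r).length with h | h
    · rw [List.getElem?_append_left h]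
      have := hv₁ m ((substIter Θ m r).length - 1 - t) (by lia)
      rw [← hrev, List.getElem?_reverse (by lia), hlen, this, ← ωv, hrev]
      congr 2
      lia
    · obtain ⟨d, rfl⟩ := Nat.exists_eq_add_of_le h
      rw [List.length_append] at ht
      rw [List.getElem?_append_right h, Nat.add_sub_cancel_left, hu₁ m d (by lia), ← ωu]
      push_cast
      rw [add_sub_cancel_left]

/-- A fixed point of an iterate lies in the substitution subshift as soon as its central two-letter
word occurs in the language. -/
lemma mem_substShift_of_fixed {ω : ℤ → A} {k k' : ℕ} {a : A}
    (h2 : ∀ a, 2 ≤ (substIter θ k a).length) (hrl : [r, l] <:+: substIter θ k' a)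
    (hω : ∀ m, ∀ t : ℕ,
      t < (substIter (substIter θ k) m r ++ substIter (substIter θ k) m l).length →
        (substIter (substIter θ k) m r ++ substIter (substIter θ k) m l)[t]? =
          some (ω (t - (substIter (substIter θ k) m r).length))) :
    ω ∈ substShift θ := by
  intro i n
  let m := i.natAbs + n
  have hr := lt_length_substIter h2 m r
  have hl := lt_length_substIter h2 m l
  have hinf := hrl.flatMap (substIter θ (k * m))
  rw [← substIter_add] at hinf
  refine ⟨k * m + k', a, List.IsInfix.trans ?_ hinf⟩
  rw [List.flatMap_cons, List.flatMap_singleton, ← substIter_substIter, ← substIter_substIter,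
    List.infix_iff_getElem?]
  refine ⟨(i + (substIter (substIter θ k) m r).length).toNat, ?_, fun t ht => ?_⟩
  · rw [List.length_ofFn, List.length_append]
    lia
  · rw [List.length_ofFn] at ht
    rw [hω m _ (by rw [List.length_append]; lia), List.getElem_ofFn]
    congr 2
    lia

lemma infix_flatMap_of_proper {w : List A} (hw : 2 ≤ w.length)
    (hΘ : ∀ a, (Θ a).head? = some l ∧ (Θ a).getLast? = some r) : [r, l] <:+: w.flatMap Θ := by
  match w, hw with
  | b :: c :: w, _ =>
    obtain ⟨x, hx⟩ := List.getLast?_eq_some_iff.1 (hΘ b).2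
    obtain ⟨y, hy⟩ := List.head?_eq_some_iff.1 (hΘ c).1
    exact ⟨x, y ++ w.flatMap Θ, by simp [hx, hy]⟩

lemma flatMap_proper {w : List A} (hw : w ≠ [])
    (hΘ : ∀ a, (Θ a).head? = some l ∧ (Θ a).getLast? = some r) :
    (w.flatMap Θ).head? = some l ∧ (w.flatMap Θ).getLast? = some r := by
  constructor
  · obtain ⟨b, w, rfl⟩ := List.exists_cons_of_ne_nil hw
    simp [(hΘ b).1]
  · obtain ⟨w, b, rfl⟩ := (List.eq_nil_or_concat' w).resolve_left hw
    simp [(hΘ b).2]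

end TwoSided

/-- The subshift of a proper primitive substitution contains a fixed point of some iterate. -/
lemma exists_mem_substShift_inflation {A : Type*} [Finite A] [Nonempty A] {θ : A → List A}
    (hproper : SubstProper θ) (hprim : SubstPrimitive θ) :
    ∃ ω ∈ substShift θ, ∃ f, Inflation ω f ∧ ∀ j, 2 ≤ f (j + 1) - f j := by
  obtain ⟨l, r, k₀, hk₀⟩ := hproper
  obtain ⟨k₁, hk₁⟩ := Filter.eventually_atTop.1
    (Filter.eventually_all.2 fun a => (hprim.2 a).eventually_ge_atTop 2)
  have h2 : ∀ a, 2 ≤ (substIter θ (k₀ + k₁) a).length := hk₁ _ (by lia)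
  have hΘ : ∀ a, (substIter θ (k₀ + k₁) a).head? = some l ∧
      (substIter θ (k₀ + k₁) a).getLast? = some r := by
    intro a
    rw [substIter_add]
    refine flatMap_proper (fun h => ?_) hk₀
    have := hk₁ k₁ le_rfl a
    simp [h] at this
  have hrl := infix_flatMap_of_proper (h2 (Classical.arbitrary A)) hΘ
  rw [← substIter_add] at hrl
  obtain ⟨ω, f, h₀, h₁, h₃, h₄⟩ := exists_fixed_biinfinite (hΘ l).1 (hΘ r).2 h2
  refine ⟨ω, mem_substShift_of_fixed h2 hrl h₄, f, ⟨h₀, fun j => ?_, fun j j' hj => ?_,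
    fun j j' hj t ht₁ ht₂ => ?_⟩, fun j => ?_⟩
  · have := h₁ j
    have := h2 (ω j)
    lia
  · rw [h₁, h₁, hj]
  · lift t to ℕ using ht₁
    rw [h₁] at ht₂
    have e₁ := h₃ j t (by lia)
    have e₂ := h₃ j' t (by rw [← hj]; lia)
    rw [hj, e₂, Option.some_inj] at e₁
    exact e₁.symm
  · rw [h₁]
    exact_mod_cast h2 (ω j)

lemma isClosed_substShift {A : Type*} [TopologicalSpace A] [DiscreteTopology A]
    (θ : A → List A) : IsClosed (substShift θ) := by
  have : substShift θ = ⋂ (i : ℤ) (n : ℕ), (fun x : ℤ → A => fun t : Fin n => x (i + (t : ℕ))) ⁻¹'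
      {w | ∃ (k : ℕ) (a : A), List.ofFn w <:+: substIter θ k a} := by
    ext x
    simp [substShift]
  rw [this]
  exact isClosed_iInter fun i => isClosed_iInter fun n =>
    (isClosed_discrete _).preimage (continuous_pi fun t => continuous_apply _)

lemma iterate_shiftMap {A : Type*} {X : Set (ℤ → A)} {T : Equiv.Perm X}
    (hT : ∀ x : X, (T x : ℤ → A) = shiftMap (x : ℤ → A)) (n : ℕ) (x : X) :
    ((T ^ n) x : ℤ → A) = shiftMap^[n] x := by
  induction n with
  | zero => rfl
  | succ n ih => rw [pow_succ', Equiv.Perm.mul_apply, hT, ih, Function.iterate_succ_apply']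

end Speedup

/-- A minimal bounded speedup `S` of a proper, primitive, aperiodic
substitution subshift `(X^θ, T)` is self-induced: `(X^θ, S)` is topologically conjugate to
the first-return map of `S` on some proper nonempty clopen subset `U`. -/
theorem boundedSpeedup_of_substitution_selfInduced
    {A : Type*} [Fintype A] [Nonempty A] [TopologicalSpace A] [DiscreteTopology A]
    (θ : A → List A) (hθne : ∀ a, θ a ≠ [])
    (hproper : SubstProper θ) (hprim : SubstPrimitive θ) (haper : SubstAperiodic θ)
    (T : Equiv.Perm ↥(substShift θ))
    (hT : ∀ x : ↥(substShift θ), ((T x : ℤ → A)) = shiftMap (x : ℤ → A))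
    (p : ↥(substShift θ) → ℕ) (hp1 : ∀ x, 1 ≤ p x) (hpbdd : ∃ M : ℕ, ∀ x, p x ≤ M)
    (S : Equiv.Perm ↥(substShift θ)) (hSc : Continuous S) (hSc' : Continuous S.symm)
    (hSp : ∀ x, S x = (T ^ p x) x)
    (hSmin : ∀ x : ↥(substShift θ), Dense (Set.range fun n : ℤ => (S ^ n) x)) :
    ∃ U : Set ↥(substShift θ), IsClopen U ∧ U.Nonempty ∧ U ≠ Set.univ ∧
      ∃ (φ : ↥(substShift θ) ≃ₜ ↥U) (r : ↥U → ℕ),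
        (∀ y : ↥U, 1 ≤ r y ∧ (S ^ r y) (y : ↥(substShift θ)) ∈ U ∧
          ∀ n : ℕ, 1 ≤ n → n < r y → (S ^ n) (y : ↥(substShift θ)) ∉ U) ∧
        ∀ x : ↥(substShift θ),
          ((φ (S x) : ↥U) : ↥(substShift θ)) =
            (S ^ r (φ x)) ((φ x : ↥U) : ↥(substShift θ)) := by
  obtain ⟨ω, hω, f, hf, h2⟩ := Speedup.exists_mem_substShift_inflation hproper hprim
  obtain ⟨M, hM⟩ := hpbdd
  have : CompactSpace (substShift θ) :=
    isCompact_iff_compactSpace.1 (Speedup.isClosed_substShift θ).isCompact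
  exact Speedup.selfInduced_of_inflation (ω := ⟨ω, hω⟩) (fun x k => by rw [hT]; rfl)
    (fun x n hn h => haper x x.2 n hn (by rw [← Speedup.iterate_shiftMap hT, h]))
    hp1 hM hSc hSc' hSp hSmin hf h2
end
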